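/- arXiv:2007.05885 — 2 statements merged into one kernel-verified Lean document; each statement's English description precedes it below -/
import Mathlib

section
/- (ZF) For every countable non-standard model N of PA and every countable set A ⊆ 2^ω − SSy(N), there is a family (M_X : X ⊆ 2^ω) of models such that each M_X is an elementary extension of N, |M_X| = |SSy(M_X)| = max{ω, |X|}, for all X, Y ⊆ 2^ω one has X ⊆ Y ⟺ M_X ≼ M_Y ⟺ SSy(M_X) ⊆ SSy(M_Y), and moreover A ∩ SSy(M_X) = ∅ for all X ⊆ 2^ω. -/
open FirstOrder FirstOrder.Language

/-- Function symbols of the language of arithmetic: `0`, `1`, `+`, `·`. -/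
inductive arithFunc : ℕ → Type
  | zero : arithFunc 0
  | one : arithFunc 0
  | add : arithFunc 2
  | mul : arithFunc 2
  deriving DecidableEq

/-- Relation symbols of the language of arithmetic: `<`. -/
inductive arithRel : ℕ → Type
  | lt : arithRel 2
  deriving DecidableEq

/-- The first-order language of arithmetic `{0, 1, +, ·, <}`. -/
def arith : FirstOrder.Language := ⟨arithFunc, arithRel⟩

namespace Arith

variable {M : Type*} [arith.Structure M]

/-- The interpretation of `0`. -/
def zeroM (M : Type*) [arith.Structure M] : M :=
  Structure.funMap (L := arith) arithFunc.zero ![]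

/-- The interpretation of `1`. -/
def oneM (M : Type*) [arith.Structure M] : M :=
  Structure.funMap (L := arith) arithFunc.one ![]

/-- The interpretation of `+`. -/
def addM (x y : M) : M := Structure.funMap (L := arith) arithFunc.add ![x, y]

/-- The interpretation of `·`. -/
def mulM (x y : M) : M := Structure.funMap (L := arith) arithFunc.mul ![x, y]

/-- The interpretation of `<`. -/
def ltM (x y : M) : Prop := Structure.RelMap (L := arith) arithRel.lt ![x, y]

/-- Non-strict order. -/
def leM (x y : M) : Prop := ltM x y ∨ x = y

/-- The numeral `n` in `M`: `0`, or `1 + 1 + ⋯ + 1`. -/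
def numeral (M : Type*) [arith.Structure M] : ℕ → M
  | 0 => zeroM M
  | n + 1 => addM (numeral M n) (oneM M)

/-- The standard `arith`-structure on `ℕ`. -/
instance : arith.Structure ℕ where
  funMap {n} f v :=
    match f with
    | .zero => 0
    | .one => 1
    | .add => v 0 + v 1
    | .mul => v 0 * v 1
  RelMap {n} r v :=
    match r with
    | .lt => v 0 < v 1

/-- `M` is a model of Peano arithmetic: it satisfies the finitely many basic axioms of
`PA` together with induction for all parametrically definable sets (which is equivalent
to the usual first-order induction scheme). -/
def IsPAModel (M : Type*) [arith.Structure M] : Prop :=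
  (∀ x : M, addM x (zeroM M) = x) ∧
  (∀ x y : M, addM x (addM y (oneM M)) = addM (addM x y) (oneM M)) ∧
  (∀ x : M, mulM x (zeroM M) = zeroM M) ∧
  (∀ x y : M, mulM x (addM y (oneM M)) = addM (mulM x y) x) ∧
  (∀ x : M, ¬ ltM x (zeroM M)) ∧
  (∀ x y : M, ltM x (addM y (oneM M)) ↔ (ltM x y ∨ x = y)) ∧
  (∀ x : M, addM x (oneM M) ≠ zeroM M) ∧
  (∀ x y : M, addM x (oneM M) = addM y (oneM M) → x = y) ∧
  (∀ s : Set M, Set.Definable₁ (Set.univ : Set M) arith s →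
    zeroM M ∈ s → (∀ x ∈ s, addM x (oneM M) ∈ s) → ∀ x : M, x ∈ s)

/-- An element of `M` is standard if it is a numeral. -/
def IsStd (x : M) : Prop := ∃ n : ℕ, x = numeral M n

/-- `M` is a non-standard model of `PA`: a model of `PA` not isomorphic to the standard
model `ℕ`. -/
def NonstandardModel (M : Type*) [arith.Structure M] : Prop :=
  IsPAModel M ∧ ¬ Nonempty (M ≃[arith] ℕ)

/-- `(x)_i = 1`: the `i`-th binary digit of `x` is `1`, for standard `i`.  This is expressed
by saying that `x = u·2^(i+1) + (2^i + v)` with `v < 2^i`, where `2^i`, `2^(i+1)` are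
numerals. -/
def digitB (x : M) (i : ℕ) : Prop :=
  ∃ u v : M, x = addM (mulM u (numeral M (2 ^ (i + 1)))) (addM (numeral M (2 ^ i)) v) ∧
    ltM v (numeral M (2 ^ i))

/-- The standard system of `M`: the collection of subsets of `ℕ` coded by some
non-standard element of `M` (via its standard binary digits). -/
def SSy (M : Type*) [arith.Structure M] : Set (Set ℕ) :=
  {X | ∃ a : M, ¬ IsStd a ∧ ∀ i : ℕ, i ∈ X ↔ digitB a i}

/-- A function `M → M` is definable (with parameters) if its graph is a definable set. -/
def DefinableFun₁ (f : M → M) : Prop :=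
  Set.Definable (Set.univ : Set M) arith {v : Fin 2 → M | f (v 0) = v 1}

/-- A `k`-ary function `M^k → M` is definable (with parameters) if its graph is a
definable set. -/
def DefinableFun {k : ℕ} (F : (Fin k → M) → M) : Prop :=
  Set.Definable (Set.univ : Set M) arith
    {v : Fin (k + 1) → M | F (fun i => v i.castSucc) = v (Fin.last k)}

/-- `c` is the internal cardinality of the set `D ⊆ M`: there is an `M`-definable
bijection between `{x : x < c}` and `D`. -/
def InternalCard (D : Set M) (c : M) : Prop :=
  ∃ f : M → M, DefinableFun₁ f ∧ Set.BijOn f {x : M | ltM x c} D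

/-- `y = 2^x` in the model `M`, expressed via the existence of a definable function
satisfying the recursion of the base-`2` exponential up to `x`. -/
def IsPow2 (x y : M) : Prop :=
  ∃ f : M → M, DefinableFun₁ f ∧ f (zeroM M) = oneM M ∧
    (∀ z : M, ltM z x → f (addM z (oneM M)) = addM (f z) (f z)) ∧ f x = y

end Arith

/-!
Call a definable set `D` of `S`-tuples of elements of `N` large if there is a standard `K` such
that, for every standard `n`, the tuples in `D` realise at least a `1 / K` fraction of the tuples of
binary strings of length `n`. If a large set is split into two definable pieces, one of them is
large, and by the Cauchy–Schwarz inequality the pairs of tuples all of whose mixtures lie in a given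
large set form a large set again. Starting from all of `N` and doubling the tuple at each step, one
thus reaches tuples indexed by the strings of length `k` for every `k`; following the branch
`x ⊆ ℕ` gives a sequence `b x` of elements of `N`. At each step the large set may be shrunk, so that
the value of a definable function along finitely many branches eventually differs, in a fixed digit,
* from every other branch, because on a large set one coordinate is not determined by the others;
* from each `a ∈ A`, because otherwise the digits of `a` would be decided by which of two definable
  sets fails to be large. Non-largeness is witnessed at a standard `n`, so that comparing the
  witnesses as in Rosser's theorem would code `a` in `N`.

In an ultrapower of `N` over `ℕ`, let `M_X` consist of the values of the definable functions at the
classes of finitely many `b x` with `x ∈ X`. By Łoś's theorem and definable choice `M_X` is an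
elementary substructure, no set in `A` is coded in it, and the set coded by `b x` is coded in `M_X`
exactly when `x ∈ X`.
-/

namespace Arith

section Definability

variable {L : FirstOrder.Language} {M : Type*} [L.Structure M] {α S : Type*} {A : Set M}

/-- A predicate on tuples is definable (with parameters in `A`) if its extension is. -/
@[fun_prop]
def DefinablePred (A : Set M) (L : FirstOrder.Language) [L.Structure M]
    (P : (α → M) → Prop) : Prop :=
  A.Definable L {v | P v}

variable {P Q : (α → M) → Prop} {f g : (α → M) → M}

@[fun_prop]
theorem DefinablePred.and (hP : DefinablePred A L P) (hQ : DefinablePred A L Q) :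
    DefinablePred A L fun v => P v ∧ Q v :=
  hP.inter hQ

@[fun_prop]
theorem DefinablePred.or (hP : DefinablePred A L P) (hQ : DefinablePred A L Q) :
    DefinablePred A L fun v => P v ∨ Q v :=
  hP.union hQ

@[fun_prop]
theorem DefinablePred.not (hP : DefinablePred A L P) : DefinablePred A L fun v => ¬ P v :=
  hP.compl

@[fun_prop]
theorem DefinablePred.imp (hP : DefinablePred A L P) (hQ : DefinablePred A L Q) :
    DefinablePred A L fun v => P v → Q v := by
  simp only [imp_iff_not_or]
  fun_prop

@[fun_prop]
theorem DefinablePred.iff (hP : DefinablePred A L P) (hQ : DefinablePred A L Q) :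
    DefinablePred A L fun v => (P v ↔ Q v) := by
  simp only [iff_def]
  fun_prop

theorem DefinablePred.reindex {β : Type*} {P : (β → M) → Prop} (hP : DefinablePred A L P)
    (e : β → α) : DefinablePred A L fun v => P fun i => v (e i) :=
  Set.Definable.preimage_comp e hP

theorem DefinablePred.subst {β : Type*} [Finite β] {P : (β → M) → Prop} (hP : DefinablePred A L P)
    {F : β → (α → M) → M} (hF : ∀ i, A.DefinableFun L (F i)) :
    DefinablePred A L fun v => P fun i => F i v :=
  Set.Definable.preimage_map (F := fun v i => F i v) hF hP

theorem DefinablePred.exists_tuple [Finite S] {P : (α → M) → (S → M) → Prop}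
    (h : DefinablePred A L fun w : α ⊕ S → M => P (fun i => w (.inl i)) (fun s => w (.inr s))) :
    DefinablePred A L fun v => ∃ x, P v x :=
  Set.Definable.exists_of_finite h

theorem DefinablePred.forall_tuple [Finite S] {P : (α → M) → (S → M) → Prop}
    (h : DefinablePred A L fun w : α ⊕ S → M => P (fun i => w (.inl i)) (fun s => w (.inr s))) :
    DefinablePred A L fun v => ∀ x, P v x :=
  Set.Definable.forall_of_finite h

@[fun_prop]
theorem DefinablePred.exists {P : (α → M) → M → Prop}
    (h : DefinablePred A L fun w : Option α → M => P (fun i => w (some i)) (w none)) :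
    DefinablePred A L fun v => ∃ y, P v y := by
  have := DefinablePred.exists_tuple (S := Unit) (P := fun v x => P v (x ()))
    (h.reindex fun o : Option α => o.elim (Sum.inr ()) Sum.inl)
  convert! this using 3 with v
  exact ⟨fun ⟨y, hy⟩ => ⟨fun _ => y, hy⟩, fun ⟨x, hx⟩ => ⟨x (), hx⟩⟩

@[fun_prop]
theorem DefinablePred.forall {P : (α → M) → M → Prop}
    (h : DefinablePred A L fun w : Option α → M => P (fun i => w (some i)) (w none)) :
    DefinablePred A L fun v => ∀ y, P v y := by
  have : DefinablePred A L fun v => ¬ ∃ y, ¬ P v y := (DefinablePred.exists h.not).not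
  simpa only [not_exists, not_not] using this

theorem DefinablePred.forall_finite [Finite S] {P : S → (α → M) → Prop}
    (h : ∀ s, DefinablePred A L (P s)) : DefinablePred A L fun v => ∀ s, P s v := by
  have := Set.definable_iInter_of_finite h
  rwa [← Set.ofPred_forall] at this

theorem DefinablePred.const (p : Prop) : DefinablePred A L fun _ : α → M => p := by
  by_cases h : p <;> simp [DefinablePred, h]

@[fun_prop]
theorem DefinablePred.eq (hf : A.DefinableFun L f) (hg : A.DefinableFun L g) :
    DefinablePred A L fun v => f v = g v :=
  hf.ofPred_eq hg

theorem definablePred_realize (φ : L.Formula α) : DefinablePred A L fun v => φ.Realize v :=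
  Set.Definable.mono (Set.empty_definable_iff.2 ⟨φ, rfl⟩) (Set.empty_subset A)

theorem definablePred_relMap₂ (r : L.Relations 2) (hf : A.DefinableFun L f)
    (hg : A.DefinableFun L g) :
    DefinablePred A L fun v => Structure.RelMap r ![f v, g v] := by
  have h : DefinablePred A L fun v : Fin 2 → M => Structure.RelMap r ![v 0, v 1] := by
    simpa only [Formula.realize_rel₂] using!
      definablePred_realize (A := A) (r.formula₂ (.var (0 : Fin 2)) (.var 1))
  exact h.subst (F := ![f, g]) (by simp [Fin.forall_fin_two, hf, hg])

theorem definableFun_funMap₂ (c : L.Functions 2) (hf : A.DefinableFun L f)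
    (hg : A.DefinableFun L g) :
    A.DefinableFun L fun v => Structure.funMap c ![f v, g v] :=
  Set.DefinableFun.comp (g := fun v => ![f v, g v])
    (by simp [Set.DefinableMap, Fin.forall_fin_two, hf, hg])
    ((Set.DefinableFun.fun_symbol (M := M) c).of_empty (A := A))

@[fun_prop]
theorem definableFun_const_univ (a : M) :
    (Set.univ : Set M).DefinableFun L fun _ : α → M => a :=
  definableFun_const L α (Set.mem_univ a)

end Definability

/-- Type class version of `IsPAModel`. -/
class PAModel (M : Type*) [arith.Structure M] : Prop where
  isPAModel : IsPAModel M

namespace PAModel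

variable {M : Type*} [arith.Structure M] [PAModel M] {α : Type*} {A : Set M} {f g : (α → M) → M}

instance (M : Type*) [arith.Structure M] [PAModel M] : Zero M := ⟨zeroM M⟩
instance (M : Type*) [arith.Structure M] [PAModel M] : One M := ⟨oneM M⟩
instance (M : Type*) [arith.Structure M] [PAModel M] : Add M := ⟨addM⟩
instance (M : Type*) [arith.Structure M] [PAModel M] : Mul M := ⟨mulM⟩
instance (M : Type*) [arith.Structure M] [PAModel M] : LT M := ⟨ltM⟩

@[fun_prop]
theorem definableFun_add (hf : A.DefinableFun arith f) (hg : A.DefinableFun arith g) :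
    A.DefinableFun arith fun v => f v + g v :=
  definableFun_funMap₂ arithFunc.add hf hg

@[fun_prop]
theorem definableFun_mul (hf : A.DefinableFun arith f) (hg : A.DefinableFun arith g) :
    A.DefinableFun arith fun v => f v * g v :=
  definableFun_funMap₂ arithFunc.mul hf hg

@[fun_prop]
theorem definablePred_lt (hf : A.DefinableFun arith f) (hg : A.DefinableFun arith g) :
    DefinablePred A arith fun v => f v < g v :=
  definablePred_relMap₂ arithRel.lt hf hg

protected theorem add_zero (x : M) : x + 0 = x := isPAModel.1 x
protected theorem add_succ (x y : M) : x + (y + 1) = x + y + 1 := isPAModel.2.1 x y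
protected theorem mul_zero (x : M) : x * 0 = 0 := isPAModel.2.2.1 x
protected theorem mul_succ (x y : M) : x * (y + 1) = x * y + x := isPAModel.2.2.2.1 x y
protected theorem not_lt_zero (x : M) : ¬ x < 0 := isPAModel.2.2.2.2.1 x
protected theorem lt_succ {x y : M} : x < y + 1 ↔ x < y ∨ x = y := isPAModel.2.2.2.2.2.1 x y
protected theorem succ_ne_zero (x : M) : x + 1 ≠ 0 := isPAModel.2.2.2.2.2.2.1 x
protected theorem succ_inj {x y : M} : x + 1 = y + 1 → x = y := isPAModel.2.2.2.2.2.2.2.1 x y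

theorem induct {P : M → Prop} (hP : DefinablePred Set.univ arith fun v : Fin 1 → M => P (v 0))
    (zero : P 0) (succ : ∀ x, P x → P (x + 1)) (x : M) : P x :=
  isPAModel.2.2.2.2.2.2.2.2 {x | P x} hP zero succ x

protected theorem zero_add (x : M) : 0 + x = x := by
  refine induct (P := fun x : M => 0 + x = x) (by fun_prop) (PAModel.add_zero 0) (fun x hx => ?_) x
  rw [PAModel.add_succ, hx]

protected theorem succ_add (x y : M) : x + 1 + y = x + y + 1 := by
  refine induct (P := fun y : M => x + 1 + y = x + y + 1)
    (by fun_prop) (by simp [PAModel.add_zero]) (fun y hy => ?_) y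
  rw [PAModel.add_succ, hy, PAModel.add_succ]

protected theorem add_comm (x y : M) : x + y = y + x := by
  refine induct (P := fun y : M => x + y = y + x)
    (by fun_prop) (by simp [PAModel.add_zero, PAModel.zero_add]) (fun y hy => ?_) y
  rw [PAModel.add_succ, hy, PAModel.succ_add]

protected theorem add_assoc (x y z : M) : x + y + z = x + (y + z) := by
  refine induct (P := fun z : M => x + y + z = x + (y + z))
    (by fun_prop) (by simp [PAModel.add_zero]) (fun z hz => ?_) z
  rw [PAModel.add_succ, hz, PAModel.add_succ, PAModel.add_succ]

instance : AddCommMonoid M where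
  add_assoc := PAModel.add_assoc
  zero_add := PAModel.zero_add
  add_zero := PAModel.add_zero
  add_comm := PAModel.add_comm
  nsmul := nsmulRec

protected theorem zero_mul (x : M) : 0 * x = 0 := by
  refine induct (P := fun x : M => 0 * x = 0) (by fun_prop) (PAModel.mul_zero 0) (fun x hx => ?_) x
  rw [PAModel.mul_succ, hx, add_zero]

protected theorem succ_mul (x y : M) : (x + 1) * y = x * y + y := by
  refine induct (P := fun y : M => (x + 1) * y = x * y + y)
    (by fun_prop) (by simp [PAModel.mul_zero]) (fun y hy => ?_) y
  rw [PAModel.mul_succ, hy, PAModel.mul_succ]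
  ac_rfl

protected theorem mul_comm (x y : M) : x * y = y * x := by
  refine induct (P := fun y : M => x * y = y * x)
    (by fun_prop) (by simp [PAModel.mul_zero, PAModel.zero_mul]) (fun y hy => ?_) y
  rw [PAModel.mul_succ, hy, PAModel.succ_mul]

protected theorem mul_add (x y z : M) : x * (y + z) = x * y + x * z := by
  refine induct (P := fun z : M => x * (y + z) = x * y + x * z)
    (by fun_prop) (by simp [PAModel.mul_zero]) (fun z hz => ?_) z
  rw [← add_assoc, PAModel.mul_succ, hz, PAModel.mul_succ, add_assoc]

protected theorem mul_assoc (x y z : M) : x * y * z = x * (y * z) := by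
  refine induct (P := fun z : M => x * y * z = x * (y * z))
    (by fun_prop) (by simp [PAModel.mul_zero]) (fun z hz => ?_) z
  rw [PAModel.mul_succ, hz, PAModel.mul_succ, PAModel.mul_add]

protected theorem mul_one (x : M) : x * 1 = x := by
  rw [← zero_add (1 : M), PAModel.mul_succ, PAModel.mul_zero, zero_add]

instance : CommSemiring M where
  mul_assoc := PAModel.mul_assoc
  one_mul x := by rw [PAModel.mul_comm, PAModel.mul_one]
  mul_one := PAModel.mul_one
  zero_mul := PAModel.zero_mul
  mul_zero := PAModel.mul_zero
  left_distrib := PAModel.mul_add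
  right_distrib x y z := by
    rw [PAModel.mul_comm, PAModel.mul_add, PAModel.mul_comm z, PAModel.mul_comm z]
  mul_comm := PAModel.mul_comm
  npow := npowRec
  natCast n := Nat.unaryCast n

theorem eq_zero_or_succ (x : M) : x = 0 ∨ ∃ y, x = y + 1 :=
  induct (P := fun x : M => x = 0 ∨ ∃ y, x = y + 1) (by fun_prop) (.inl rfl)
    (fun x _ => .inr ⟨x, rfl⟩) x

protected theorem add_right_cancel (x y z : M) : x + z = y + z → x = y := by
  refine induct (P := fun z : M => x + z = y + z → x = y) (by fun_prop) (by simp)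
    (fun z hz h => hz (PAModel.succ_inj ?_)) z
  rwa [add_assoc, add_assoc]

instance : IsCancelAdd M :=
  haveI : IsRightCancelAdd M := ⟨fun z x y h => PAModel.add_right_cancel x y z h⟩
  AddCommMagma.IsRightCancelAdd.toIsCancelAdd M

theorem lt_iff_exists {x y : M} : x < y ↔ ∃ z, x + (z + 1) = y := by
  refine induct (P := fun y : M => ∀ x, x < y ↔ ∃ z, x + (z + 1) = y) (by fun_prop) ?_ ?_ y x
  · intro x
    simp only [PAModel.not_lt_zero, ← add_assoc, PAModel.succ_ne_zero, exists_false]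
  · intro y hy x
    rw [PAModel.lt_succ, hy]
    constructor
    · rintro (⟨z, rfl⟩ | rfl)
      · exact ⟨z + 1, by rw [← add_assoc]⟩
      · exact ⟨0, by rw [zero_add]⟩
    · rintro ⟨z, hz⟩
      rw [← add_assoc] at hz
      have := PAModel.succ_inj hz
      obtain rfl | ⟨w, rfl⟩ := eq_zero_or_succ z
      · exact .inr (by simpa using this)
      · exact .inl ⟨w, this⟩

theorem trichotomy (x y : M) : x < y ∨ x = y ∨ y < x := by
  refine induct (P := fun x : M => x < y ∨ x = y ∨ y < x) (by fun_prop) ?_ ?_ x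
  · obtain rfl | ⟨w, rfl⟩ := eq_zero_or_succ y
    · simp
    · exact .inl (lt_iff_exists.2 ⟨w, zero_add _⟩)
  · rintro x (h | rfl | h)
    · obtain ⟨z, rfl⟩ := lt_iff_exists.1 h
      obtain rfl | ⟨w, rfl⟩ := eq_zero_or_succ z
      · simp
      · exact .inl (lt_iff_exists.2 ⟨w, by ring⟩)
    · exact .inr (.inr (PAModel.lt_succ.2 (.inr rfl)))
    · exact .inr (.inr (PAModel.lt_succ.2 (.inl h)))

instance (M : Type*) [arith.Structure M] [PAModel M] : LE M := ⟨fun x y => ∃ z, x + z = y⟩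

theorem eq_zero_of_add_eq_zero {x y : M} (h : x + y = 0) : y = 0 := by
  obtain rfl | ⟨w, rfl⟩ := eq_zero_or_succ y
  · rfl
  · rw [← add_assoc] at h
    exact absurd h (PAModel.succ_ne_zero _)

noncomputable instance : LinearOrder M where
  le_refl x := ⟨0, add_zero x⟩
  le_trans := by
    rintro x _ _ ⟨a, rfl⟩ ⟨b, rfl⟩
    exact ⟨a + b, by rw [add_assoc]⟩
  le_antisymm := by
    rintro x y ⟨a, rfl⟩ ⟨b, hb⟩
    have : a + b = 0 := by simpa [add_assoc] using hb
    rw [add_comm] at this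
    rw [eq_zero_of_add_eq_zero this, add_zero]
  le_total x y := by
    rcases trichotomy x y with h | rfl | h
    · obtain ⟨z, hz⟩ := lt_iff_exists.1 h
      exact .inl ⟨_, hz⟩
    · exact .inl ⟨0, add_zero x⟩
    · obtain ⟨z, hz⟩ := lt_iff_exists.1 h
      exact .inr ⟨_, hz⟩
  lt_iff_le_not_ge x y := by
    constructor
    · intro h
      obtain ⟨z, rfl⟩ := lt_iff_exists.1 h
      refine ⟨⟨_, rfl⟩, ?_⟩
      rintro ⟨w, hw⟩
      have : w + z + 1 = 0 := by
        have : x + (w + z + 1) = x := by rw [← hw]; nth_rw 2 [← hw]; ring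
        simpa using this
      exact PAModel.succ_ne_zero _ this
    · rintro ⟨⟨z, rfl⟩, h⟩
      obtain rfl | ⟨w, rfl⟩ := eq_zero_or_succ z
      · exact absurd ⟨0, by simp⟩ h
      · exact lt_iff_exists.2 ⟨w, rfl⟩
  toDecidableLE := Classical.decRel _

instance : CanonicallyOrderedAdd M where
  exists_add_of_le := by
    rintro x y ⟨z, hz⟩
    exact ⟨z, hz.symm⟩
  le_add_self x y := ⟨y, add_comm _ _⟩
  le_self_add x y := ⟨y, rfl⟩

instance : Nontrivial M := ⟨0, 1, fun h => PAModel.succ_ne_zero (0 : M) (by rw [zero_add, ← h])⟩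

instance : IsOrderedAddMonoid M where
  add_le_add_left := by
    rintro x _ ⟨z, rfl⟩ y
    exact ⟨z, by ring⟩

instance : IsStrictOrderedRing M :=
  { (inferInstance : IsOrderedAddMonoid M), (inferInstance : Nontrivial M) with
    le_of_add_le_add_left := by
      rintro x y z ⟨w, hw⟩
      exact ⟨w, by rw [add_assoc] at hw; exact add_left_cancel hw⟩
    zero_le_one := zero_le
    mul_lt_mul_of_pos_left := by
      intro x hx y z hyz
      obtain ⟨w, rfl⟩ := lt_iff_exists.1 hx
      obtain ⟨u, rfl⟩ := lt_iff_exists.1 hyz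
      exact lt_iff_exists.2 ⟨w * u + w + u, by ring⟩
    mul_lt_mul_of_pos_right := by
      intro x hx y z hyz
      obtain ⟨w, rfl⟩ := lt_iff_exists.1 hx
      obtain ⟨u, rfl⟩ := lt_iff_exists.1 hyz
      exact lt_iff_exists.2 ⟨w * u + w + u, by ring⟩ }

protected theorem lt_add_one_iff {x y : M} : x < y + 1 ↔ x ≤ y := by
  rw [PAModel.lt_succ, le_iff_lt_or_eq]

@[fun_prop]
theorem definablePred_le (hf : A.DefinableFun arith f) (hg : A.DefinableFun arith g) :
    DefinablePred A arith fun v => f v ≤ g v := by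
  simp only [le_iff_lt_or_eq]
  fun_prop

theorem numeral_eq (n : ℕ) : numeral M n = (n : M) := by
  induction n with
  | zero => rfl
  | succ n ih => rw [numeral, ih, Nat.cast_succ]; rfl

end PAModel

section ChineseRemainder

variable {R : Type*} [CommSemiring R]

theorem exists_mul_prod_eq_mul_add_one {ι : Type*} {f : ι → R} {b : R} {t : Finset ι}
    (h : ∀ i ∈ t, ∃ u v, u * f i = v * b + 1) : ∃ u v, u * ∏ i ∈ t, f i = v * b + 1 := by
  classical
  induction t using Finset.induction_on with
  | empty => exact ⟨1, 0, by simp⟩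
  | insert i t hi ih =>
    obtain ⟨u, v, huv⟩ := ih fun j hj => h j (Finset.mem_insert_of_mem hj)
    obtain ⟨u', v', huv'⟩ := h i (Finset.mem_insert_self i t)
    refine ⟨u' * u, v' * v * b + v' + v, ?_⟩
    rw [Finset.prod_insert hi, mul_mul_mul_comm, huv, huv']
    ring

-- The moduli have the form `1 + g j` so that `g j` represents `-1`.
theorem exists_forall_eq_mul_add {g c : ℕ → R} (k : ℕ)
    (h : ∀ j < k, ∀ i < j, ∃ u v, u * (1 + g i) = v * (1 + g j) + 1) :
    ∃ a, ∀ j < k, ∃ u, a = u * (1 + g j) + c j := by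
  induction k with
  | zero => exact ⟨0, by simp⟩
  | succ k ih =>
    obtain ⟨a, ha⟩ := ih fun j hj => h j (by lia)
    obtain ⟨u, v, huv⟩ := exists_mul_prod_eq_mul_add_one (f := fun i => 1 + g i)
      (t := Finset.range k) fun i hi => h k k.lt_succ_self i (Finset.mem_range.1 hi)
    set e := ∏ i ∈ Finset.range k, (1 + g i)
    refine ⟨a + e * (u * (c k + a * g k)), fun j hj => ?_⟩
    rcases Nat.lt_succ_iff_lt_or_eq.1 hj with hj | rfl
    · obtain ⟨w, hw⟩ := ha j hj
      obtain ⟨d, hd⟩ : 1 + g j ∣ e :=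
        Finset.dvd_prod_of_mem (fun i => 1 + g i) (Finset.mem_range.2 hj)
      refine ⟨w + d * (u * (c k + a * g k)), ?_⟩
      rw [hd]
      nth_rewrite 1 [hw]
      ring
    · refine ⟨a + v * (c j + a * g j), ?_⟩
      rw [← mul_assoc, mul_comm e, huv]
      ring

theorem exists_mul_one_add_eq_mul_one_add_add_one {m q : R} {i d : ℕ} (hm : m = (d + 1 : ℕ) * q) :
    ∃ u v, u * (1 + ((i : R) + 1) * m) = v * (1 + (((i + d + 1 : ℕ) : R) + 1) * m) + 1 := by
  refine ⟨1 + (i + 1) * ((i + d + 1 : ℕ) + 1) * q * ((i + d + 1 : ℕ) + 1) * m,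
    (i + 1) * q * ((d + 1 : ℕ) + ((i + d + 1 : ℕ) + 1) * (i + 1) * m), ?_⟩
  rw [hm]
  push_cast
  ring

end ChineseRemainder

theorem testBit_iff_exists_eq {n i : ℕ} :
    n.testBit i ↔ ∃ u v, n = u * (2 ^ i + 2 ^ i) + (2 ^ i + v) ∧ v < 2 ^ i := by
  rw [Nat.testBit_eq_decide_div_mod_eq, decide_eq_true_iff]
  constructor
  · intro h
    refine ⟨n / 2 ^ i / 2, n % 2 ^ i, ?_, Nat.mod_lt _ (by positivity)⟩
    have h₁ := Nat.div_add_mod n (2 ^ i)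
    have h₂ := Nat.div_add_mod (n / 2 ^ i) 2
    rw [h] at h₂
    conv_lhs => rw [← h₁, ← h₂]
    ring
  · rintro ⟨u, v, rfl, hv⟩
    rw [show u * (2 ^ i + 2 ^ i) + (2 ^ i + v) = v + 2 ^ i * (2 * u + 1) by ring,
      Nat.add_mul_div_left _ _ (by positivity), Nat.div_eq_of_lt hv]
    lia

theorem exists_forall_testBit_iff (p : ℕ → Prop) (n : ℕ) :
    ∃ x : ℕ, ∀ i < n, x.testBit i ↔ p i := by
  classical
  refine ⟨Nat.ofBits fun i : Fin n => decide (p i), fun i hi => ?_⟩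
  rw [Nat.testBit_ofBits_lt _ _ hi, decide_eq_true_iff]

namespace PAModel

variable {M : Type*} [arith.Structure M] [PAModel M] {α : Type*} {A : Set M} {f g : (α → M) → M}

theorem isStd_iff {x : M} : IsStd x ↔ ∃ n : ℕ, x = n := by
  simp only [IsStd, numeral_eq]

theorem exists_natCast_of_lt {x : M} {n : ℕ} (h : x < n) : ∃ m < n, x = m := by
  induction n with
  | zero => simp at h
  | succ n ih =>
    rw [Nat.cast_succ, PAModel.lt_succ] at h
    rcases h with h | rfl
    · obtain ⟨m, hm, rfl⟩ := ih h
      exact ⟨m, hm.trans n.lt_succ_self, rfl⟩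
    · exact ⟨n, n.lt_succ_self, rfl⟩

theorem exists_natCast_of_le {x : M} {n : ℕ} (h : x ≤ n) : ∃ m ≤ n, x = m := by
  obtain ⟨m, hm, rfl⟩ := exists_natCast_of_lt (x := x) (n := n + 1)
    (by rw [Nat.cast_succ]; exact PAModel.lt_add_one_iff.2 h)
  exact ⟨m, Nat.le_of_lt_succ hm, rfl⟩

theorem natCast_lt_of_not_isStd {x : M} (h : ¬ IsStd x) (n : ℕ) : (n : M) < x := by
  by_contra! hxn
  obtain ⟨m, -, rfl⟩ := exists_natCast_of_le hxn
  exact h (isStd_iff.2 ⟨m, rfl⟩)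

theorem not_isStd_of_forall_le {x : M} (h : ∀ n : ℕ, (n : M) ≤ x) : ¬ IsStd x := by
  intro hx
  obtain ⟨m, rfl⟩ := isStd_iff.1 hx
  exact absurd (Nat.cast_le.1 (h (m + 1))) (by lia)

theorem exists_not_isStd (h : NonstandardModel M) : ∃ x : M, ¬ IsStd x := by
  by_contra! H
  let c : ℕ ≃ M := Equiv.ofBijective (Nat.cast : ℕ → M) ⟨Nat.cast_injective, fun x => by
    obtain ⟨n, hn⟩ := isStd_iff.1 (H x)
    exact ⟨n, hn.symm⟩⟩
  have tuple : ∀ v : Fin 2 → ℕ, c ∘ v = ![((v 0 : ℕ) : M), ((v 1 : ℕ) : M)] := by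
    intro v
    ext i
    fin_cases i <;> rfl
  refine h.2 ⟨FirstOrder.Language.Equiv.symm (L := arith) ⟨c, fun {n} f v => ?_, fun {n} r v => ?_⟩⟩
  · match n, f, v with
    | _, .zero, v =>
      exact (Nat.cast_zero (R := M)).trans
        (congrArg (Structure.funMap (L := arith) arithFunc.zero) (Subsingleton.elim _ _))
    | _, .one, v =>
      exact (Nat.cast_one (R := M)).trans
        (congrArg (Structure.funMap (L := arith) arithFunc.one) (Subsingleton.elim _ _))
    | _, .add, v =>
      exact (Nat.cast_add (R := M) (v 0) (v 1)).trans
        (congrArg (Structure.funMap (L := arith) arithFunc.add) (tuple v).symm)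
    | _, .mul, v =>
      exact (Nat.cast_mul (α := M) (v 0) (v 1)).trans
        (congrArg (Structure.funMap (L := arith) arithFunc.mul) (tuple v).symm)
  · match n, r, v with
    | _, .lt, v =>
      exact (iff_of_eq (congrArg (Structure.RelMap (L := arith) arithRel.lt) (tuple v))).trans
        (Nat.cast_lt (α := M) (m := v 0) (n := v 1))

theorem overspill {P : M → Prop} (hM : ∃ x : M, ¬ IsStd x)
    (hP : DefinablePred Set.univ arith fun v : Fin 1 → M => P (v 0)) (h : ∀ n : ℕ, P n) :
    ∃ x : M, ¬ IsStd x ∧ P x := by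
  obtain ⟨c, hc⟩ := hM
  by_contra! H
  have isStd_iff_forall_le : ∀ x : M, IsStd x ↔ ∀ y ≤ x, P y := by
    refine fun x => ⟨fun hx y hy => ?_, fun hx => ?_⟩
    · obtain ⟨n, rfl⟩ := isStd_iff.1 hx
      obtain ⟨m, -, rfl⟩ := exists_natCast_of_le hy
      exact h m
    · by_contra hx'
      exact H x hx' (hx x le_rfl)
  refine hc ((isStd_iff_forall_le c).2 ?_)
  refine induct (P := fun x : M => ∀ y ≤ x, P y) ?_ ?_ ?_ c
  · refine DefinablePred.forall (DefinablePred.imp (by fun_prop) ?_)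
    exact hP.reindex fun _ => none
  · exact (isStd_iff_forall_le 0).1 (isStd_iff.2 ⟨0, by simp⟩)
  · intro x hx
    obtain ⟨n, rfl⟩ := isStd_iff.1 ((isStd_iff_forall_le x).2 hx)
    exact (isStd_iff_forall_le _).1 (isStd_iff.2 ⟨n + 1, by simp⟩)

theorem exists_least {P : M → Prop}
    (hP : DefinablePred Set.univ arith fun v : Fin 1 → M => P (v 0)) (h : ∃ x, P x) :
    ∃ x, P x ∧ ∀ y, P y → x ≤ y := by
  by_contra! H
  obtain ⟨x, hx⟩ := h
  have : ∀ x : M, ∀ y, y ≤ x → ¬ P y := by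
    refine induct (P := fun x : M => ∀ y, y ≤ x → ¬ P y) ?_ ?_ ?_
    · refine DefinablePred.forall (DefinablePred.imp (by fun_prop) (DefinablePred.not ?_))
      exact hP.reindex fun _ => none
    · intro y hy hPy
      obtain ⟨z, -, hz⟩ := H y hPy
      exact absurd (hz.trans_le hy) (PAModel.not_lt_zero z)
    · intro x ih y hy hPy
      obtain ⟨z, hPz, hz⟩ := H y hPy
      exact ih z (PAModel.lt_add_one_iff.1 (hz.trans_le hy)) hPz
  exact this x x le_rfl hx

/-- The binary digit of `x` at the power of two `p` is `1`. Unlike in `digitB`, the power `p` may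
be non-standard. -/
def Dig (x p : M) : Prop := ∃ u v, x = u * (p + p) + (p + v) ∧ v < p

@[fun_prop]
theorem definablePred_dig (hf : A.DefinableFun arith f) (hg : A.DefinableFun arith g) :
    DefinablePred A arith fun v => Dig (f v) (g v) := by
  have h : DefinablePred A arith fun v : Fin 2 → M => Dig (v 0) (v 1) := by
    unfold Dig
    fun_prop
  exact h.subst (F := ![f, g]) (by simp [Fin.forall_fin_two, hf, hg])

theorem digitB_iff (x : M) (i : ℕ) : digitB x i ↔ Dig x ((2 ^ i : ℕ) : M) := by
  unfold digitB Dig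
  simp only [numeral_eq, pow_succ, mul_two, Nat.cast_add]
  rfl

theorem dig_natCast (n i : ℕ) : Dig (n : M) ((2 ^ i : ℕ) : M) ↔ n.testBit i := by
  rw [testBit_iff_exists_eq]
  constructor
  · rintro ⟨u, v, h, hv⟩
    obtain ⟨v, hv', rfl⟩ := exists_natCast_of_lt hv
    have hun : u ≤ n := by
      have : 1 ≤ 2 ^ i + 2 ^ i := le_add_right Nat.one_le_two_pow
      rw [h]
      exact (le_mul_of_one_le_right zero_le (by exact_mod_cast this)).trans le_self_add
    obtain ⟨u, -, rfl⟩ := exists_natCast_of_le hun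
    exact ⟨u, v, by exact_mod_cast h, hv'⟩
  · rintro ⟨u, v, h, hv⟩
    exact ⟨u, v, by exact_mod_cast h, by exact_mod_cast hv⟩

theorem exists_natCast_of_dvd {d : M} {n : ℕ} (hn : n ≠ 0) (h : d ∣ n) : ∃ m, m ∣ n ∧ d = m := by
  obtain ⟨e, he⟩ := h
  have hde : d * e ≠ 0 := he ▸ Nat.cast_ne_zero.2 hn
  have one_le : ∀ x : M, x ≠ 0 → 1 ≤ x := fun x hx => by
    obtain rfl | ⟨y, rfl⟩ := eq_zero_or_succ x
    · exact absurd rfl hx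
    · exact le_add_self
  obtain ⟨d, -, rfl⟩ := exists_natCast_of_le (x := d) (n := n)
    (he ▸ le_mul_of_one_le_right zero_le (one_le e (right_ne_zero_of_mul hde)))
  obtain ⟨e, -, rfl⟩ := exists_natCast_of_le (x := e) (n := n)
    (he ▸ le_mul_of_one_le_left zero_le (one_le _ (left_ne_zero_of_mul hde)))
  exact ⟨d, ⟨e, by exact_mod_cast he⟩, rfl⟩

theorem even_natCast_iff {n : ℕ} : Even (n : M) ↔ Even n := by
  refine ⟨fun ⟨c, hc⟩ => ?_, fun ⟨c, hc⟩ => ⟨c, by exact_mod_cast hc⟩⟩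
  obtain ⟨c, -, rfl⟩ := exists_natCast_of_le (x := c) (n := n) (hc ▸ le_self_add)
  exact ⟨c, by exact_mod_cast hc⟩

/-- A definable notion of power of two, correct on the standard elements (`pow2_natCast_iff`). -/
def Pow2 (q : M) : Prop := ∀ d, d ∣ q → d = 1 ∨ Even d

@[fun_prop]
theorem definablePred_pow2 (hf : Set.univ.DefinableFun arith f) :
    DefinablePred Set.univ arith fun v => Pow2 (f v) := by
  have h : DefinablePred Set.univ arith fun v : Fin 1 → M => Pow2 (v 0) := by
    unfold Pow2 Even
    simp only [dvd_def]
    fun_prop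
  exact h.subst (F := ![f]) (by simp [hf])

theorem pow2_natCast_iff {n : ℕ} : Pow2 (n : M) ↔ ∃ i, n = 2 ^ i := by
  constructor
  · intro h
    rcases n.eq_two_pow_or_exists_odd_prime_and_dvd with ⟨i, hi⟩ | ⟨p, hp, hpn, hodd⟩
    · exact ⟨i, hi⟩
    · rcases h p (Nat.cast_dvd_cast hpn) with h | h
      · exact absurd (by exact_mod_cast h) hp.one_lt.ne'
      · exact absurd (even_natCast_iff.1 h) (Nat.not_even_iff_odd.2 hodd)
  · rintro ⟨i, rfl⟩ x hx
    obtain ⟨d, hd, rfl⟩ := exists_natCast_of_dvd (by positivity) hx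
    obtain ⟨j, -, rfl⟩ := (Nat.dvd_prime_pow Nat.prime_two).1 hd
    rcases j with _ | j
    · simp
    · exact .inr (even_natCast_iff.2 (Nat.even_pow.2 ⟨even_two, j.succ_ne_zero⟩))

theorem pow2_two_pow (i : ℕ) : Pow2 ((2 ^ i : ℕ) : M) :=
  pow2_natCast_iff.2 ⟨i, rfl⟩

theorem exists_ge_forall_dig_iff (P : M → Prop) (n : ℕ) :
    ∃ x : M, n ≤ x ∧ ∀ p ≤ (n : M), Pow2 p → (Dig x p ↔ P p) := by
  obtain ⟨x, hx⟩ := exists_forall_testBit_iff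
    (fun i => P ((2 ^ i : ℕ) : M) ∨ i = n + 1) (n + 2)
  have hnx : n ≤ x :=
    (Nat.lt_two_pow_self.trans (Nat.pow_lt_pow_right one_lt_two n.lt_succ_self)).le.trans
      (Nat.ge_two_pow_of_testBit ((hx (n + 1) (by lia)).2 (.inr rfl)))
  refine ⟨x, by exact_mod_cast hnx, fun p hp hp2 => ?_⟩
  obtain ⟨p, hpn, rfl⟩ := exists_natCast_of_le hp
  obtain ⟨i, rfl⟩ := pow2_natCast_iff.1 hp2
  have hi : i < n + 1 := Nat.lt_succ_of_le (Nat.lt_two_pow_self.le.trans hpn)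
  rw [dig_natCast, hx i (by lia)]
  exact or_iff_left hi.ne

theorem mem_SSy_of_definablePred {P : M → Prop} (hM : ∃ x : M, ¬ IsStd x)
    (hP : DefinablePred Set.univ arith fun v : Fin 1 → M => P (v 0)) :
    {i : ℕ | P ((2 ^ i : ℕ) : M)} ∈ SSy M := by
  have hdef : DefinablePred Set.univ arith fun v : Fin 1 → M =>
      ∃ x, v 0 ≤ x ∧ ∀ p ≤ v 0, Pow2 p → (Dig x p ↔ P p) := by
    refine .exists (.and (by fun_prop) (.forall (.imp (by fun_prop)
      (.imp (by fun_prop) (.iff (by fun_prop) ?_)))))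
    exact hP.reindex fun _ => none
  obtain ⟨b, hb, x, hbx, hx⟩ := overspill
    (P := fun b => ∃ x, b ≤ x ∧ ∀ p ≤ b, Pow2 p → (Dig x p ↔ P p)) hM hdef
    (exists_ge_forall_dig_iff P)
  refine ⟨x, not_isStd_of_forall_le fun n => (natCast_lt_of_not_isStd hb n).le.trans hbx,
    fun i => ?_⟩
  rw [digitB_iff, hx _ (natCast_lt_of_not_isStd hb _).le (pow2_two_pow i)]
  rfl

/-- Gödel's `β` predicate: `y` is the remainder of `a` modulo `1 + (j + 1) m`, i.e. the `j`-th
term of the sequence coded by `a` and `m`. -/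
def Beta (a m j y : M) : Prop := ∃ u, a = u * (1 + (j + 1) * m) + y ∧ y < 1 + (j + 1) * m

@[fun_prop]
theorem definablePred_beta {h k : (α → M) → M} (hf : Set.univ.DefinableFun arith f)
    (hg : Set.univ.DefinableFun arith g) (hh : Set.univ.DefinableFun arith h)
    (hk : Set.univ.DefinableFun arith k) :
    DefinablePred Set.univ arith fun v => Beta (f v) (g v) (h v) (k v) := by
  have H : DefinablePred Set.univ arith fun v : Fin 4 → M => Beta (v 0) (v 1) (v 2) (v 3) := by
    unfold Beta
    fun_prop
  exact H.subst (F := ![f, g, h, k]) (by simp [Fin.forall_fin_succ, hf, hg, hh, hk])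

theorem Beta.unique {a m j y y' : M} (h : Beta a m j y) (h' : Beta a m j y') : y = y' := by
  have key : ∀ {u u' c y y' : M}, u ≤ u' → y < c → u * c + y = u' * c + y' → y = y' := by
    intro u u' c y y' huu' hy h
    obtain ⟨w, rfl⟩ := exists_add_of_le huu'
    rw [add_mul, add_assoc] at h
    have h := add_left_cancel h
    obtain rfl | ⟨w, rfl⟩ := eq_zero_or_succ w
    · simpa using h
    · refine absurd hy (not_lt.2 ?_)
      rw [h, add_mul, one_mul, add_right_comm]
      exact le_add_self
  obtain ⟨u, hu, hy⟩ := h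
  obtain ⟨u', hu', hy'⟩ := h'
  rcases le_total u u' with h | h
  · exact key h hy (hu ▸ hu')
  · exact (key h hy' (hu ▸ hu').symm).symm

theorem exists_forall_beta_iff {m : M} {k : ℕ} (hm : ∀ d : ℕ, 0 < d → d < k → (d : M) ∣ m)
    {c : ℕ → M} (hc : ∀ j < k, c j ≤ m) :
    ∃ a, ∀ j : ℕ, j < k → ∀ y, Beta a m j y ↔ y = c j := by
  obtain ⟨a, ha⟩ := exists_forall_eq_mul_add (g := fun j => ((j : M) + 1) * m) (c := c) k
    fun j hj i hij => by
      obtain ⟨d, rfl⟩ := Nat.exists_eq_add_of_lt hij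
      obtain ⟨q, hq⟩ := hm (d + 1) d.succ_pos (by lia)
      exact exists_mul_one_add_eq_mul_one_add_add_one hq
  have hb : ∀ j : ℕ, j < k → Beta a m j (c j) := by
    intro j hj
    obtain ⟨u, hu⟩ := ha j hj
    refine ⟨u, hu, (hc j hj).trans_lt ?_⟩
    rw [add_comm, PAModel.lt_add_one_iff, add_mul, one_mul]
    exact le_add_self
  refine ⟨a, fun j hj y => ⟨fun h => h.unique (hb j hj), ?_⟩⟩
  rintro rfl
  exact hb j hj

theorem exists_forall_beta_iff_of_finite {S : Type*} [Finite S] (c : S → ℕ → M) (k : ℕ) :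
    ∃ (m : M) (a : S → M), ∀ s, ∀ j < k, ∀ y, Beta (a s) m j y ↔ y = c s j := by
  have := Fintype.ofFinite S
  set B := ∑ s, ∑ j ∈ Finset.range k, c s j
  have c_le : ∀ s, ∀ j < k, c s j ≤ B := fun s j hj =>
    (Finset.single_le_sum (f := c s) (fun _ _ => zero_le) (Finset.mem_range.2 hj)).trans
      (Finset.single_le_sum (f := fun s => ∑ j ∈ Finset.range k, c s j)
        (fun _ _ => zero_le) (Finset.mem_univ s))
  have le_m : B ≤ (k.factorial : M) * B := le_mul_of_one_le_left zero_le
    (by exact_mod_cast Nat.one_le_iff_ne_zero.2 k.factorial_ne_zero)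
  have dvd_m : ∀ d : ℕ, 0 < d → d < k → (d : M) ∣ k.factorial * B := fun d hd hdk =>
    (Nat.cast_dvd_cast (Nat.dvd_factorial hd hdk.le)).mul_right B
  choose a ha using fun s =>
    exists_forall_beta_iff dvd_m fun j hj => (c_le s j hj).trans le_m
  exact ⟨_, a, ha⟩

end PAModel

section Counting

variable {ι R S : Type*}

theorem sum_sum_update [Fintype ι] [DecidableEq ι] [Fintype R] (h : (ι → R) → ℕ) (i : ι) :
    ∑ v, ∑ x, h (Function.update v i x) = Fintype.card R * ∑ v, h v := by
  have hinv : Function.Involutive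
      fun p : (ι → R) × R => (Function.update p.1 i p.2, p.1 i) := by
    rintro ⟨v, x⟩
    simp
  have := Equiv.sum_comp hinv.toPerm fun p : (ι → R) × R => h p.1
  rw [Fintype.sum_prod_type, Fintype.sum_prod_type] at this
  simpa [Finset.mul_sum] using this

theorem update_update_comp_swap [DecidableEq ι] {i j : ι} (hij : i ≠ j) (v : ι → R) (x y : R) :
    Function.update (Function.update v i x) j y ∘ Equiv.swap i j =
      Function.update (Function.update v i y) j x := by
  ext k
  by_cases hki : k = i
  · subst hki
    simp [hij]
  by_cases hkj : k = j
  · subst hkj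
    simp [hij]
  · simp [Equiv.swap_apply_of_ne_of_ne hki hkj, hki, hkj]

-- Cauchy–Schwarz for the numbers of `x` with `update v i x ∈ Q`, summed over `v`.
theorem sq_ncard_le_card_mul_ncard_inter_swap [Finite ι] [DecidableEq ι] [Finite R] [Nonempty R]
    {Q : Set (ι → R)} {i j : ι} (hij : i ≠ j)
    (hQ : ∀ v x, Function.update v j x ∈ Q ↔ v ∈ Q) :
    Q.ncard ^ 2 ≤ Nat.card (ι → R) * {v | v ∈ Q ∧ v ∘ Equiv.swap i j ∈ Q}.ncard := by
  classical
  have := Fintype.ofFinite ι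
  have := Fintype.ofFinite R
  have ncard_eq_sum : ∀ P : Set (ι → R), P.ncard = ∑ v, if v ∈ P then 1 else 0 := fun P => by
    rw [Set.ncard_eq_toFinset_card', ← Finset.card_filter]
    congr 1
    ext
    simp
  let q : (ι → R) → ℕ := fun v => if v ∈ Q then 1 else 0
  let q' : (ι → R) → ℕ := fun v => if v ∈ Q ∧ v ∘ Equiv.swap i j ∈ Q then 1 else 0
  have q_mul_q : ∀ v x y, q (Function.update v i x) * q (Function.update v i y) =
      q' (Function.update (Function.update v i x) j y) := by
    intro v x y
    simp only [q, q', update_update_comp_swap hij, hQ]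
    split_ifs <;> simp_all
  have sum_sq : ∑ v, (∑ x, q (Function.update v i x)) ^ 2 =
      Fintype.card R * (Fintype.card R * ∑ v, q' v) := by
    simp only [sq, Finset.sum_mul_sum, q_mul_q]
    rw [sum_sum_update fun w => ∑ y, q' (Function.update w j y), sum_sum_update]
  have cauchy_schwarz := sq_sum_le_card_mul_sum_sq (s := (Finset.univ : Finset (ι → R)))
    (f := fun v => ∑ x, q (Function.update v i x))
  rw [sum_sum_update, sum_sq, Finset.card_univ] at cauchy_schwarz
  rw [Nat.card_eq_fintype_card, ncard_eq_sum, ncard_eq_sum]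
  refine Nat.le_of_mul_le_mul_left ?_ (pow_pos (Fintype.card_pos (α := R)) 2)
  calc Fintype.card R ^ 2 * (∑ v, q v) ^ 2 = (Fintype.card R * ∑ v, q v) ^ 2 := by rw [mul_pow]
    _ ≤ Fintype.card (ι → R) * (Fintype.card R * (Fintype.card R * ∑ v, q' v)) := cauchy_schwarz
    _ = _ := by simp only [q', Set.mem_ofPred_eq]; ring_nf

/-- The pairs of tuples, written as one tuple indexed by `S × Bool`, whose mixtures selecting the
second tuple only at coordinates in `U` all belong to `P`. -/
def mixtures (P : Set (S → R)) (U : Set S) : Set (S × Bool → R) :=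
  {v | ∀ σ : S → Bool, (∀ s ∉ U, σ s = false) → (fun s => v (s, σ s)) ∈ P}

theorem mixtures_univ (P : Set (S → R)) :
    mixtures P Set.univ = {v | ∀ σ : S → Bool, (fun s => v (s, σ s)) ∈ P} := by
  simp [mixtures]

theorem mixtures_empty (P : Set (S → R)) :
    mixtures P ∅ = {v | (fun s => v (s, false)) ∈ P} := by
  ext v
  refine ⟨fun h => h (fun _ => false) fun _ _ => rfl, fun h σ hσ => ?_⟩
  rw [funext fun s => hσ s (Set.notMem_empty s)]
  exact h

theorem ncard_mixtures_empty (P : Set (S → R)) :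
    (mixtures P ∅).ncard = P.ncard * Nat.card (S → R) := by
  let e : (S × Bool → R) ≃ (S → R) × (S → R) :=
    ((Equiv.prodComm S Bool).arrowCongr (.refl R)).trans
      ((Equiv.curry Bool S R).trans (Equiv.boolArrowEquivProd _))
  have : mixtures P ∅ = e ⁻¹' (P ×ˢ Set.univ) := by
    rw [mixtures_empty]
    ext v
    exact (and_iff_left trivial).symm
  rw [this, Set.ncard_preimage_of_injective_subset_range e.injective (by simp), Set.ncard_prod,
    Set.ncard_univ]

theorem update_mem_mixtures_iff [DecidableEq S] {P : Set (S → R)} {U : Set S} {t : S} (ht : t ∉ U)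
    (v : S × Bool → R) (x : R) :
    Function.update v (t, true) x ∈ mixtures P U ↔ v ∈ mixtures P U := by
  refine forall_congr' fun σ => forall_congr' fun hσ => ?_
  have hne : ∀ s, (s, σ s) ≠ (t, true) := by
    rintro s h
    obtain ⟨rfl, hs⟩ := Prod.mk.inj h
    exact absurd hs (by simp [hσ s ht])
  simp only [Function.update_of_ne (hne _)]

theorem mem_mixtures_insert [DecidableEq S] {P : Set (S → R)} {U : Set S} {t : S}
    {v : S × Bool → R} (hv : v ∈ mixtures P U)
    (hv' : v ∘ Equiv.swap (t, false) (t, true) ∈ mixtures P U) : v ∈ mixtures P (insert t U) := by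
  intro σ hσ
  have hσU : ∀ s ∉ U, s ≠ t → σ s = false := fun s hs hst => hσ s (by simp [hs, hst])
  cases hσt : σ t with
  | false =>
    refine hv σ fun s hs => ?_
    by_cases hst : s = t
    · rw [hst, hσt]
    · exact hσU s hs hst
  | true =>
    have := hv' (Function.update σ t false) fun s hs => by
      by_cases hst : s = t
      · simp [hst]
      · rw [Function.update_of_ne hst, hσU s hs hst]
    convert! this using 2 with s
    by_cases hst : s = t
    · subst hst
      simp [hσt]
    · simp only [Function.comp, Function.update_of_ne hst]
      rw [Equiv.swap_apply_of_ne_of_ne] <;> simp [hst]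

theorem card_le_pow_mul_ncard_mixtures [Finite S] [Finite R] [Nonempty R] {P : Set (S → R)} {K : ℕ}
    (hP : Nat.card (S → R) ≤ K * P.ncard) (U : Finset S) :
    Nat.card (S × Bool → R) ≤ K ^ 2 ^ U.card * (mixtures P U).ncard := by
  classical
  induction U using Finset.induction_on with
  | empty =>
    rw [Finset.coe_empty, ncard_mixtures_empty, Finset.card_empty, pow_zero, pow_one, ← mul_assoc]
    refine le_trans (le_of_eq ?_) (Nat.mul_le_mul_right _ hP)
    have := Fintype.ofFinite S
    simp only [Nat.card_fun, Nat.card_eq_fintype_card, Fintype.card_prod, Fintype.card_bool]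
    ring
  | insert t U ht ih =>
    have hsub : {v | v ∈ mixtures P ↑U ∧
        v ∘ Equiv.swap (t, false) (t, true) ∈ mixtures P ↑U} ⊆ mixtures P ↑(insert t U) := by
      rw [Finset.coe_insert]
      exact fun v hv => mem_mixtures_insert hv.1 hv.2
    have hswap := sq_ncard_le_card_mul_ncard_inter_swap (i := (t, false)) (j := (t, true))
      (by simp) (update_mem_mixtures_iff (P := P) (U := U) (by simpa using ht))
    have hle := hswap.trans (Nat.mul_le_mul_left _ (Set.ncard_le_ncard hsub (Set.toFinite _)))
    rw [Finset.card_insert_of_notMem ht]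
    set W := Nat.card (S × Bool → R)
    refine Nat.le_of_mul_le_mul_left ?_ (Nat.card_pos : 0 < W)
    calc W * W ≤ (K ^ 2 ^ U.card * (mixtures P ↑U).ncard) *
          (K ^ 2 ^ U.card * (mixtures P ↑U).ncard) := Nat.mul_le_mul ih ih
      _ = K ^ 2 ^ (U.card + 1) * (mixtures P ↑U).ncard ^ 2 := by ring
      _ ≤ K ^ 2 ^ (U.card + 1) * (W * (mixtures P ↑(insert t U)).ncard) :=
        Nat.mul_le_mul_left _ hle
      _ = _ := by ring

theorem card_le_pow_mul_ncard_forall_mem [Finite S] [Finite R] [Nonempty R] {P : Set (S → R)}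
    {K : ℕ} (hP : Nat.card (S → R) ≤ K * P.ncard) :
    Nat.card (S × Bool → R) ≤ K ^ 2 ^ Nat.card S *
      {v : S × Bool → R | ∀ σ : S → Bool, (fun s => v (s, σ s)) ∈ P}.ncard := by
  have := Fintype.ofFinite S
  have := card_le_pow_mul_ncard_mixtures hP Finset.univ
  rwa [Finset.coe_univ, mixtures_univ, Finset.card_univ, ← Nat.card_eq_fintype_card] at this

end Counting

section Largeness

variable {N S : Type*} {ρ : N → ℕ → Prop}

open Classical in
/-- The first `n` digits of `x`, where `ρ x i` says that the `i`-th digit of `x` is `1`. -/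
noncomputable def digits (ρ : N → ℕ → Prop) (n : ℕ) (x : N) : Fin n → Bool :=
  fun i => decide (ρ x i)

theorem digits_apply_eq_true_iff {n : ℕ} {x : N} {i : Fin n} : digits ρ n x i = true ↔ ρ x i := by
  simp only [digits, decide_eq_true_eq]

theorem digits_eq_digits_iff {n : ℕ} {x y : N} :
    digits ρ n x = digits ρ n y ↔ ∀ i < n, (ρ x i ↔ ρ y i) := by
  rw [funext_iff, Fin.forall_iff]
  exact forall₂_congr fun i hi => by
    rw [Bool.eq_iff_iff, digits_apply_eq_true_iff, digits_apply_eq_true_iff]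

/-- In every coordinate, the members of `T` are determined by their first `n` digits. -/
def Separated (ρ : N → ℕ → Prop) (n : ℕ) (T : Set (S → N)) : Prop :=
  ∀ x ∈ T, ∀ y ∈ T, ∀ s, digits ρ n (x s) = digits ρ n (y s) → x s = y s

/-- `D` contains a `1 / K` fraction of the tuples of strings of length `n`, a string being
represented by an element with these first `n` digits. -/
def LargeAt (ρ : N → ℕ → Prop) (K n : ℕ) (D : Set (S → N)) : Prop :=
  ∃ T : Finset (S → N), ↑T ⊆ D ∧ Separated ρ n (T : Set (S → N)) ∧
    Nat.card (S → Fin n → Bool) ≤ K * T.card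

/-- `D` contains a positive fraction of the tuples, uniformly in the number of digits. -/
def Large (ρ : N → ℕ → Prop) (D : Set (S → N)) : Prop := ∃ K, ∀ n, LargeAt ρ K n D

variable {K n : ℕ} {D E : Set (S → N)} {T T' : Set (S → N)}

theorem Separated.mono (h : T' ⊆ T) (hT : Separated ρ n T) : Separated ρ n T' :=
  fun x hx y hy => hT x (h hx) y (h hy)

theorem Separated.injOn_digits (hT : Separated ρ n T) :
    Set.InjOn (fun x s => digits ρ n (x s)) T :=
  fun x hx y hy h => funext fun s => hT x hx y hy s (congrFun h s)

theorem Separated.exists_representatives (hT : Separated ρ n T) (hne : T.Nonempty) :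
    ∃ F : S → (Fin n → Bool) → N, ∀ x ∈ T, ∀ s, F s (digits ρ n (x s)) = x s := by
  obtain ⟨x₀, -⟩ := hne
  have : ∀ s (r : Fin n → Bool), ∃ z, ∀ x ∈ T, digits ρ n (x s) = r → z = x s := by
    intro s r
    by_cases h : ∃ y ∈ T, digits ρ n (y s) = r
    · obtain ⟨y, hy, rfl⟩ := h
      exact ⟨y s, fun x hx hxy => hT y hy x hx s hxy.symm⟩
    · push Not at h
      exact ⟨x₀ s, fun x hx hxr => absurd hxr (h x hx)⟩
  choose F hF using this
  exact ⟨F, fun x hx s => hF s _ x hx rfl⟩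

theorem LargeAt.mono (hD : D ⊆ E) (h : LargeAt ρ K n D) : LargeAt ρ K n E :=
  h.imp fun _ hT => ⟨hT.1.trans hD, hT.2⟩

theorem LargeAt.of_union (h : LargeAt ρ K n (D ∪ E)) :
    LargeAt ρ (2 * K) n D ∨ LargeAt ρ (2 * K) n E := by
  classical
  obtain ⟨T, hT, hsep, hcard⟩ := h
  have hsum := T.card_filter_add_card_filter_not (· ∈ D)
  have hsep' : ∀ (p : (S → N) → Prop) [DecidablePred p], Separated ρ n (T.filter p : Set (S → N)) :=
    fun p _ => hsep.mono (Finset.coe_subset.2 (T.filter_subset p))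
  rcases le_total (T.filter (· ∈ D)).card (T.filter (· ∉ D)).card with hle | hle
  · refine .inr ⟨T.filter (· ∉ D), fun x hx => ?_, hsep' _, by nlinarith⟩
    obtain ⟨hxT, hxD⟩ := Finset.mem_filter.1 hx
    exact (hT hxT).resolve_left hxD
  · exact .inl ⟨T.filter (· ∈ D), fun x hx => (Finset.mem_filter.1 hx).2, hsep' _, by nlinarith⟩

theorem Large.mono (hD : D ⊆ E) (h : Large ρ D) : Large ρ E :=
  h.imp fun _ hK n => (hK n).mono hD

variable [Finite S]

theorem large_univ (hρ : ∀ n, Function.Surjective (digits ρ n)) :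
    Large ρ (Set.univ : Set (S → N)) := by
  classical
  have := Fintype.ofFinite S
  refine ⟨1, fun n => ?_⟩
  obtain ⟨F, hF⟩ := (hρ n).hasRightInverse
  refine ⟨Finset.univ.image fun (r : S → Fin n → Bool) s => F (r s), Set.subset_univ _, ?_, ?_⟩
  · simp only [Separated, Finset.coe_image, Finset.coe_univ, Set.image_univ, Set.forall_mem_range,
      hF _]
    intro r r' s h
    rw [h]
  · rw [Finset.card_image_of_injective _ fun r r' h => funext fun s =>
      hF.injective (congrFun h s), Finset.card_univ, Nat.card_eq_fintype_card, one_mul]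

theorem LargeAt.nonempty (h : LargeAt ρ K n D) : D.Nonempty := by
  obtain ⟨T, hT, -, hcard⟩ := h
  have hpos : 0 < K * T.card := Nat.card_pos.trans_le hcard
  exact (Finset.coe_nonempty.2 (Finset.card_pos.1 (Nat.pos_of_mul_pos_left hpos))).mono hT

theorem card_digits_add (m l : ℕ) : Nat.card (S → Fin (m + l) → Bool) =
    Nat.card (S → Fin l → Bool) * Nat.card (S → Fin m → Bool) := by
  simp only [Nat.card_fun, Nat.card_fin, ← mul_pow, ← pow_add, add_comm]

-- By the pigeonhole principle, many members of `T` agree on the digits between `m` and `n`.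
theorem LargeAt.anti {m : ℕ} (hmn : m ≤ n) (h : LargeAt ρ K n D) : LargeAt ρ K m D := by
  classical
  have := Fintype.ofFinite S
  obtain ⟨l, rfl⟩ := Nat.exists_eq_add_of_le hmn
  obtain ⟨T, hT, hsep, hcard⟩ := h
  let tail : (S → N) → S → Fin l → Bool := fun x s => digits (fun y i => ρ y (m + i)) l (x s)
  obtain ⟨r, -, hr⟩ : ∃ r ∈ (Finset.univ : Finset (S → Fin l → Bool)),
      Nat.card (S → Fin m → Bool) ≤ K * (T.filter (tail · = r)).card := by
    refine Finset.exists_le_of_sum_le Finset.univ_nonempty ?_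
    rw [← Finset.mul_sum, ← Finset.card_eq_sum_card_fiberwise fun _ _ => Finset.mem_coe.2
      (Finset.mem_univ _), Finset.sum_const, Finset.card_univ, smul_eq_mul,
      ← Nat.card_eq_fintype_card, ← card_digits_add]
    exact hcard
  refine ⟨T.filter (tail · = r), fun x hx => hT (Finset.mem_filter.1 hx).1, ?_, hr⟩
  intro x hx y hy s hxy
  obtain ⟨hx, hxr⟩ := Finset.mem_filter.1 hx
  obtain ⟨hy, hyr⟩ := Finset.mem_filter.1 hy
  have htail := digits_eq_digits_iff.1 (congrFun (hxr.trans hyr.symm) s)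
  refine hsep x hx y hy s (digits_eq_digits_iff.2 fun i hi => ?_)
  rcases lt_or_ge i m with him | him
  · exact digits_eq_digits_iff.1 hxy i him
  · obtain ⟨j, rfl⟩ := Nat.exists_eq_add_of_le him
    exact htail j (by lia)

theorem LargeAt.sdiff (hD : ∀ n, LargeAt ρ K n D) (hE : ¬ Large ρ E) (n : ℕ) :
    LargeAt ρ (2 * K) n (D \ E) := by
  simp only [Large, not_exists, not_forall] at hE
  obtain ⟨m, hm⟩ := hE (2 * K)
  refine LargeAt.anti (le_max_left n m) ?_
  exact (((hD (max n m)).mono (by simp : D ⊆ E ∪ D \ E)).of_union).resolve_left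
    fun h => hm (h.anti (le_max_right _ _))

theorem Large.of_union (h : Large ρ (D ∪ E)) : Large ρ D ∨ Large ρ E := by
  by_contra! H
  obtain ⟨K, hK⟩ := h
  exact H.1 (Large.mono (by simp) ⟨2 * K, LargeAt.sdiff hK H.2⟩)

theorem Large.exists_of_biUnion {κ : Type*} (t : Finset κ) {E : κ → Set (S → N)}
    (h : Large ρ (⋃ i ∈ t, E i)) : ∃ i ∈ t, Large ρ (E i) := by
  classical
  induction t using Finset.induction_on with
  | empty =>
    obtain ⟨K, hK⟩ := h
    simpa using (hK 0).nonempty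
  | insert a t _ ih =>
    rw [Finset.set_biUnion_insert] at h
    rcases h.of_union with h | h
    · exact ⟨a, by simp, h⟩
    · obtain ⟨i, hi, h⟩ := ih h
      exact ⟨i, by simp [hi], h⟩

theorem Separated.card_mul_le {T : Finset (S → N)} (hT : Separated ρ n (T : Set (S → N)))
    (s₀ : S) (h : ∀ x ∈ T, ∀ y ∈ T, (∀ s ≠ s₀, x s = y s) → x = y) :
    2 ^ n * T.card ≤ Nat.card (S → Fin n → Bool) := by
  classical
  have := Fintype.ofFinite S
  rw [Nat.card_congr (Equiv.funSplitAt s₀ (Fin n → Bool)), Nat.card_prod, Nat.card_fun,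
    Nat.card_eq_fintype_card (α := Bool), Nat.card_eq_fintype_card (α := Fin n), Fintype.card_bool,
    Fintype.card_fin]
  refine Nat.mul_le_mul_left _ ?_
  rw [Nat.card_eq_fintype_card, ← Finset.card_univ]
  refine Finset.card_le_card_of_injOn (fun x s => digits ρ n (x s.1))
    (fun _ _ => Finset.mem_coe.2 (Finset.mem_univ _)) fun x hx y hy hxy => ?_
  exact h x hx y hy fun s hs => hT x hx y hy s (congrFun hxy ⟨s, hs⟩)

theorem Large.exists_digit_ne (hD : Large ρ D) (s₀ : S) (g : (S → N) → ℕ → Prop)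
    (hg : ∀ x y : S → N, (∀ s ≠ s₀, x s = y s) → g x = g y) :
    ∃ i, Large ρ {x | x ∈ D ∧ ¬ (g x i ↔ ρ (x s₀) i)} := by
  by_contra H
  rw [not_exists] at H
  obtain ⟨K, hK⟩ := hD
  obtain ⟨m, hm⟩ : ∃ m, 2 * K < 2 ^ m := ⟨_, Nat.lt_two_pow_self⟩
  have hE : ¬ Large ρ (⋃ i ∈ Finset.range m, {x | x ∈ D ∧ ¬ (g x i ↔ ρ (x s₀) i)}) := by
    intro h
    obtain ⟨i, -, hi⟩ := h.exists_of_biUnion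
    exact H i hi
  obtain ⟨T, hT, hsep, hcard⟩ := LargeAt.sdiff hK hE m
  have g_iff : ∀ x ∈ T, ∀ i < m, (g x i ↔ ρ (x s₀) i) := by
    intro x hx i hi
    by_contra hne
    exact (hT hx).2 (Set.mem_biUnion (Finset.mem_range.2 hi) ⟨(hT hx).1, hne⟩)
  have hle := hsep.card_mul_le s₀ fun x hx y hy hxy => by
    have h₀ : x s₀ = y s₀ := hsep x hx y hy s₀ (digits_eq_digits_iff.2 fun i hi => by
      rw [← g_iff x hx i hi, ← g_iff y hy i hi, hg x y hxy])
    funext s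
    by_cases hs : s = s₀
    · rw [hs, h₀]
    · exact hxy s hs
  have hpos : 0 < 2 * K * T.card := Nat.card_pos.trans_le hcard
  exact absurd (Nat.le_of_mul_le_mul_right (hle.trans hcard) (Nat.pos_of_mul_pos_left hpos))
    (not_le.2 hm)

theorem LargeAt.double (h : LargeAt ρ K n D) :
    LargeAt ρ (K ^ 2 ^ Nat.card S) n
      {v : S × Bool → N | ∀ σ : S → Bool, (fun s => v (s, σ s)) ∈ D} := by
  classical
  obtain ⟨T, hT, hsep, hcard⟩ := h
  have hpos : 0 < K * T.card := Nat.card_pos.trans_le hcard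
  obtain ⟨F, hF⟩ := hsep.exists_representatives
    (Finset.coe_nonempty.2 (Finset.card_pos.1 (Nat.pos_of_mul_pos_left hpos)))
  rw [← Set.ncard_coe_finset, ← hsep.injOn_digits.ncard_image] at hcard
  have hdouble := card_le_pow_mul_ncard_forall_mem hcard
  set P := (fun (x : S → N) s => digits ρ n (x s)) '' (T : Set (S → N))
  set Q := {v : S × Bool → Fin n → Bool | ∀ σ : S → Bool, (fun s => v (s, σ s)) ∈ P}
  let rep : (S × Bool → Fin n → Bool) → S × Bool → N := fun v p => F p.1 (v p)
  have digits_rep : ∀ v ∈ Q, ∀ p, digits ρ n (rep v p) = v p := by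
    rintro v hv ⟨s, b⟩
    obtain ⟨x, hx, hxv⟩ := hv fun _ => b
    have hxs : digits ρ n (x s) = v (s, b) := congrFun hxv s
    rw [← hxs]
    exact congrArg (digits ρ n) (by rw [← hF x hx s, hxs])
  have rep_injOn : Set.InjOn rep Q := fun v hv w hw h =>
    funext fun p => by rw [← digits_rep v hv, ← digits_rep w hw, h]
  refine ⟨(Set.toFinite (rep '' Q)).toFinset, ?_, ?_, ?_⟩
  · rw [Set.Finite.coe_toFinset]
    rintro _ ⟨v, hv, rfl⟩ σ
    obtain ⟨x, hx, hxv⟩ := hv σ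
    have : (fun s => rep v (s, σ s)) = x := funext fun s => by
      rw [← hF x hx s]
      exact congrArg (F s) (congrFun hxv s).symm
    exact this ▸ hT hx
  · rw [Set.Finite.coe_toFinset]
    rintro _ ⟨v, hv, rfl⟩ _ ⟨w, hw, rfl⟩ p h
    rw [digits_rep v hv, digits_rep w hw] at h
    exact congrArg (F p.1) h
  · rwa [← Set.ncard_coe_finset, Set.Finite.coe_toFinset, rep_injOn.ncard_image]

theorem Large.double (hD : Large ρ D) :
    Large ρ {v : S × Bool → N | ∀ σ : S → Bool, (fun s => v (s, σ s)) ∈ D} :=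
  hD.imp' (fun K => K ^ 2 ^ Nat.card S) fun _ h n => (h n).double

end Largeness

namespace PAModel

section CodedLargeness

variable {M : Type*} [arith.Structure M] [PAModel M] {α S : Type*} {f : (α → M) → M}

@[fun_prop]
theorem definableFun_pow (hf : Set.univ.DefinableFun arith f) (n : ℕ) :
    Set.univ.DefinableFun arith fun v => f v ^ n := by
  induction n with
  | zero =>
    simp only [pow_zero]
    fun_prop
  | succ n ih =>
    simp only [pow_succ]
    fun_prop

theorem digits_digitB_surjective (n : ℕ) :
    Function.Surjective (digits (digitB (M := M)) n) := by
  intro r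
  obtain ⟨x, hx⟩ := exists_forall_testBit_iff (fun i => ∃ h : i < n, r ⟨i, h⟩ = true) n
  refine ⟨x, funext fun i => ?_⟩
  rw [Bool.eq_iff_iff, digits_apply_eq_true_iff, digitB_iff, dig_natCast, hx i.1 i.2]
  simp

theorem forall_lt_two_pow_dig_iff_iff {x y : M} {n : ℕ} :
    (∀ p < ((2 ^ n : ℕ) : M), Pow2 p → (Dig x p ↔ Dig y p)) ↔
      digits digitB n x = digits digitB n y := by
  rw [digits_eq_digits_iff]
  constructor
  · intro h i hi
    rw [digitB_iff, digitB_iff]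
    exact h _ (by exact_mod_cast Nat.pow_lt_pow_right one_lt_two hi) (pow2_two_pow i)
  · intro h p hp hp2
    obtain ⟨p, hpn, rfl⟩ := exists_natCast_of_lt hp
    obtain ⟨i, rfl⟩ := pow2_natCast_iff.1 hp2
    rw [← digitB_iff, ← digitB_iff]
    exact h i ((Nat.pow_lt_pow_iff_right one_lt_two).1 hpn)

/-- The definable counterpart of `LargeAt digitB K n E`, with `q` for `2 ^ n`: a finite set of
tuples is replaced by a sequence of length `c` coded by means of `Beta`. -/
def CodedLarge (K : ℕ) (E : (S → M) → Prop) (q : M) : Prop :=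
  ∃ m c, ∃ a : S → M, (c ≤ q ^ Nat.card S ∧ q ^ Nat.card S ≤ K * c) ∧
    (∀ l < c, ∃ x : S → M, (∀ s, Beta (a s) m l (x s)) ∧ E x) ∧
    ∀ l < c, ∀ l' < c, ∀ x : S → M, (∀ s, Beta (a s) m l (x s)) →
      ∀ x' : S → M, (∀ s, Beta (a s) m l' (x' s)) → ((∀ s, x s = x' s) → l = l') ∧
        ∀ s, (∀ p < q, Pow2 p → (Dig (x s) p ↔ Dig (x' s) p)) → x s = x' s

theorem definablePred_codedLarge [Finite S] {E : (α → M) → (S → M) → Prop}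
    (hE : DefinablePred Set.univ arith
      fun w : α ⊕ S → M => E (fun i => w (.inl i)) (fun s => w (.inr s))) (K : ℕ)
    (q : α) : DefinablePred Set.univ arith fun v => CodedLarge K (E v) (v q) := by
  unfold CodedLarge
  refine .exists <| .exists <| .exists_tuple <| .and (by fun_prop) <| .and
    (.forall <| .imp (by fun_prop) <| .exists_tuple <| .and
      (.forall_finite fun s => by fun_prop) ?_)
    (.forall <| .imp (by fun_prop) <| .forall <| .imp (by fun_prop) <|
      .forall_tuple <| .imp (.forall_finite fun s => by fun_prop) <|
      .forall_tuple <| .imp (.forall_finite fun s => by fun_prop) <| .and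
        (.imp (.forall_finite fun s => by fun_prop) (by fun_prop))
        (.forall_finite fun s => by fun_prop))
  exact hE.reindex (Sum.elim (fun i => Sum.inl (some (Sum.inl (some (some i))))) Sum.inr :
    α ⊕ S → Option (Option (Option α) ⊕ S) ⊕ S)

theorem CodedLarge.largeAt [Finite S] {K n : ℕ} {E : Set (S → M)}
    (h : CodedLarge K (· ∈ E) ((2 ^ n : ℕ) : M)) : LargeAt digitB K n E := by
  classical
  obtain ⟨m, c, a, ⟨hc, hKc⟩, hx, hsep⟩ := h
  obtain ⟨c, -, rfl⟩ := exists_natCast_of_le (x := c) (n := (2 ^ n) ^ Nat.card S)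
    (by exact_mod_cast hc)
  choose x hx hxE using fun l : Fin c => hx l.1 (by exact_mod_cast l.2)
  have hsep : ∀ l l' : Fin c, (x l = x l' → l = l') ∧
      ∀ s, digits digitB n (x l s) = digits digitB n (x l' s) → x l s = x l' s := by
    intro l l'
    obtain ⟨hinj, hdig⟩ := hsep l.1 (by exact_mod_cast l.2) l'.1 (by exact_mod_cast l'.2)
      _ (hx l) _ (hx l')
    exact ⟨fun h => Fin.ext (by exact_mod_cast hinj (congrFun h)),
      fun s h => hdig s (forall_lt_two_pow_dig_iff_iff.2 h)⟩
  refine ⟨Finset.univ.image x, ?_, ?_, ?_⟩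
  · simpa [Set.subset_def] using hxE
  · simp only [Separated, Finset.coe_image, Finset.coe_univ, Set.image_univ, Set.forall_mem_range]
    exact fun l l' => (hsep l l').2
  · rw [Finset.card_image_of_injective _ fun l l' => (hsep l l').1, Finset.card_fin]
    simp only [Nat.card_fun, Nat.card_fin, Nat.card_eq_fintype_card (α := Bool), Fintype.card_bool]
    exact_mod_cast hKc

theorem _root_.Arith.LargeAt.codedLarge [Finite S] {K n : ℕ} {E : Set (S → M)}
    (h : LargeAt digitB K n E) : CodedLarge K (· ∈ E) ((2 ^ n : ℕ) : M) := by
  classical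
  obtain ⟨T, hT, hsep, hcard⟩ := h
  have hcard' : T.card ≤ Nat.card (S → Fin n → Bool) := by
    rw [← Set.ncard_coe_finset, ← hsep.injOn_digits.ncard_image]
    exact Set.ncard_le_card _
  simp only [Nat.card_fun, Nat.card_fin, Nat.card_eq_fintype_card (α := Bool), Fintype.card_bool]
    at hcard hcard'
  let e := T.equivFin.symm
  obtain ⟨m, a, ha⟩ := exists_forall_beta_iff_of_finite
    (fun s j => if h : j < T.card then (e ⟨j, h⟩).1 s else 0) T.card
  have beta_iff : ∀ (l : Fin T.card) (x : S → M),
      (∀ s, Beta (a s) m (l : ℕ) (x s)) ↔ x = (e l).1 := by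
    intro l x
    simp only [ha _ l l.2, l.2, dif_pos, funext_iff]
  refine ⟨m, T.card, a, ⟨by exact_mod_cast hcard', by exact_mod_cast hcard⟩, fun l hl => ?_,
    fun l hl l' hl' x hx x' hx' => ?_⟩
  · obtain ⟨l, hlc, rfl⟩ := exists_natCast_of_lt hl
    exact ⟨_, (beta_iff ⟨l, hlc⟩ _).2 rfl, hT (e ⟨l, hlc⟩).2⟩
  · obtain ⟨l, hlc, rfl⟩ := exists_natCast_of_lt hl
    obtain ⟨l', hlc', rfl⟩ := exists_natCast_of_lt hl'
    obtain rfl := (beta_iff ⟨l, hlc⟩ x).1 hx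
    obtain rfl := (beta_iff ⟨l', hlc'⟩ x').1 hx'
    refine ⟨fun h => ?_, fun s h => ?_⟩
    · rw [Fin.mk.inj (e.injective (Subtype.ext (funext h)))]
    · exact hsep _ (e _).2 _ (e _).2 s (forall_lt_two_pow_dig_iff_iff.1 h)

theorem codedLarge_iff [Finite S] {K n : ℕ} {E : Set (S → M)} :
    CodedLarge K (· ∈ E) ((2 ^ n : ℕ) : M) ↔ LargeAt digitB K n E :=
  ⟨CodedLarge.largeAt, LargeAt.codedLarge⟩

end CodedLargeness

end PAModel

namespace PAModel

section Separation

variable {M : Type*} [arith.Structure M] [PAModel M]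

theorem Pow2.exists_le_eq_two_pow {q : M} (hq : Pow2 q) {n : ℕ} (h : q ≤ ((2 ^ n : ℕ) : M)) :
    ∃ m ≤ n, q = ((2 ^ m : ℕ) : M) := by
  obtain ⟨q, hqn, rfl⟩ := exists_natCast_of_le h
  obtain ⟨m, rfl⟩ := pow2_natCast_iff.1 hq
  exact ⟨m, (Nat.pow_le_pow_iff_right one_lt_two).1 hqn, rfl⟩

-- As in Rosser's theorem, `i` is put in the set if `R₁` is witnessed before `R₀`.
theorem mem_SSy_of_separated (hM : ∃ x : M, ¬ IsStd x) {R₁ R₀ : M → M → Prop}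
    (hR₁ : DefinablePred Set.univ arith fun v : Fin 2 → M => R₁ (v 0) (v 1))
    (hR₀ : DefinablePred Set.univ arith fun v : Fin 2 → M => R₀ (v 0) (v 1)) {a : Set ℕ}
    (ha : ∀ i ∈ a, ∃ n : ℕ, R₁ ((2 ^ i : ℕ) : M) ((2 ^ n : ℕ) : M) ∧
      ∀ m ≤ n, ¬ R₀ ((2 ^ i : ℕ) : M) ((2 ^ m : ℕ) : M))
    (ha' : ∀ i ∉ a, ∃ n : ℕ, R₀ ((2 ^ i : ℕ) : M) ((2 ^ n : ℕ) : M) ∧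
      ∀ m ≤ n, ¬ R₁ ((2 ^ i : ℕ) : M) ((2 ^ m : ℕ) : M)) : a ∈ SSy M := by
  have hdef : DefinablePred Set.univ arith fun v : Fin 1 → M =>
      ∃ q, Pow2 q ∧ R₁ (v 0) q ∧ ∀ q' ≤ q, Pow2 q' → ¬ R₀ (v 0) q' := by
    refine .exists (.and (by fun_prop) (.and ?_
      (.forall (.imp (by fun_prop) (.imp (by fun_prop) (.not ?_))))))
    · exact hR₁.reindex ![some 0, none]
    · exact hR₀.reindex ![some (some 0), none]
  convert! mem_SSy_of_definablePred
    (P := fun p => ∃ q, Pow2 q ∧ R₁ p q ∧ ∀ q' ≤ q, Pow2 q' → ¬ R₀ p q') hM hdef using 1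
  ext i
  refine ⟨fun hi => ?_, fun ⟨q, hq, hq₁, hq₀⟩ => ?_⟩
  · obtain ⟨n, hn₁, hn₀⟩ := ha i hi
    refine ⟨_, pow2_two_pow n, hn₁, fun q' hq'n hq' => ?_⟩
    obtain ⟨m, hmn, rfl⟩ := hq'.exists_le_eq_two_pow hq'n
    exact hn₀ m hmn
  · by_contra hi
    obtain ⟨n, hn₀, hn₁⟩ := ha' i hi
    rcases le_total ((2 ^ n : ℕ) : M) q with hle | hle
    · exact hq₀ _ hle (pow2_two_pow n) hn₀
    · obtain ⟨m, hmn, rfl⟩ := hq.exists_le_eq_two_pow hle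
      exact hn₁ m hmn hq₁

theorem mem_SSy_of_not_large {S : Type*} [Finite S] (hM : ∃ x : M, ¬ IsStd x) {D : Set (S → M)}
    (hDdef : Set.univ.Definable arith D) (hD : Large digitB D) {Q : (S → M) → M → Prop}
    (hQ : DefinablePred Set.univ arith fun w : Option S → M => Q (fun s => w (some s)) (w none))
    {a : Set ℕ}
    (h : ∀ i : ℕ, ¬ Large digitB {x | x ∈ D ∧ ¬ (Q x ((2 ^ i : ℕ) : M) ↔ i ∈ a)}) :
    a ∈ SSy M := by
  obtain ⟨K, hK⟩ := hD
  let E : Prop → M → Set (S → M) := fun b p => {x | x ∈ D ∧ ¬ (Q x p ↔ b)}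
  let R : Prop → M → M → Prop := fun b p q => ¬ CodedLarge (2 * K) (· ∈ E b p) q
  have hdef : ∀ b, DefinablePred Set.univ arith fun v : Fin 2 → M => R b (v 0) (v 1) := fun b =>
    (definablePred_codedLarge (.and
      (DefinablePred.reindex (P := (· ∈ D)) hDdef Sum.inr) (.not (.iff
      (hQ.reindex fun s => (s.elim (Sum.inl 0) Sum.inr : Fin 2 ⊕ S)) (.const b)))) _ 1).not
  have exists_not_largeAt : ∀ i b, (i ∈ a ↔ b) →
      ∃ n, ¬ LargeAt digitB (2 * K) n (E b ((2 ^ i : ℕ) : M)) ∧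
        ∀ m ≤ n, LargeAt digitB (2 * K) m (E (¬ b) ((2 ^ i : ℕ) : M)) := by
    rintro i b hb
    have hi := h i
    simp only [hb, Large, not_exists, not_forall] at hi
    obtain ⟨n, hn⟩ := hi (2 * K)
    refine ⟨n, hn, fun m hm => LargeAt.anti hm ((LargeAt.of_union ?_).resolve_left hn)⟩
    refine (hK n).mono fun x hx => ?_
    by_cases hq : Q x ((2 ^ i : ℕ) : M) ↔ b
    · exact .inr ⟨hx, by tauto⟩
    · exact .inl ⟨hx, hq⟩
  refine mem_SSy_of_separated (R₁ := R True) (R₀ := R False) hM (hdef True) (hdef False)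
    (fun i hi => ?_) fun i hi => ?_
  · simpa only [R, codedLarge_iff, not_not, not_true_eq_false] using
      exists_not_largeAt i True (iff_true_intro hi)
  · simpa only [R, codedLarge_iff, not_not, not_false_eq_true] using
      exists_not_largeAt i False (iff_false_intro hi)

end Separation

end PAModel

instance : Countable arith.Symbols := by
  have h₁ : ∀ n, Countable (arith.Functions n) := fun n =>
    Function.Injective.countable (f := fun f : arithFunc n => match f with
      | .zero => 0 | .one => 1 | .add => 2 | .mul => (3 : ℕ))
      (by rintro ⟨⟩ ⟨⟩ h <;> first | rfl | simp at h)
  have h₂ : ∀ n, Countable (arith.Relations n) := fun n =>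
    Function.Injective.countable (f := fun _ : arithRel n => (0 : ℕ)) (by rintro ⟨⟩ ⟨⟩ _; rfl)
  exact inferInstanceAs (Countable ((Σ n, arith.Functions n) ⊕ Σ n, arith.Relations n))

section Countability

variable {L : FirstOrder.Language} [Countable L.Symbols] {M : Type*} [L.Structure M]

theorem countable_setOf_definable (α : Type*) [Countable α] (A : Set M) [Countable A] :
    {s : Set (α → M) | A.Definable L s}.Countable := by
  refine (Set.countable_range fun (φ : L.Formula (A ⊕ α)) =>
    {v : α → M | φ.Realize (Sum.elim (↑) v)}).mono fun s hs => ?_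
  obtain ⟨φ, rfl⟩ := Set.definable_iff_exists_formula_sum.1 hs
  exact ⟨φ, rfl⟩

theorem countable_setOf_definableFun (α : Type*) [Countable α] (A : Set M) [Countable A] :
    {f : (α → M) → M | A.DefinableFun L f}.Countable := by
  refine Set.Countable.preimage_of_injOn (f := Function.tupleGraph)
    (countable_setOf_definable (Option α) A) fun f _ g _ h => funext fun v => ?_
  have : (fun o : Option α => o.elim (f v) v) ∈ f.tupleGraph := rfl
  rw [h] at this
  exact this.symm

end Countability

section Fusion

/-- Binary strings of length `k`, defined so that strings of length `k + 1` are pairs. -/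
def Str : ℕ → Type
  | 0 => Unit
  | k + 1 => Str k × Bool

instance Str.finite : ∀ k, Finite (Str k)
  | 0 => inferInstanceAs (Finite Unit)
  | k + 1 => by
    have := Str.finite k
    exact inferInstanceAs (Finite (Str k × Bool))

open Classical in
/-- The string of length `k` consisting of the first values of the characteristic function
of `x`. -/
noncomputable def restr (x : Set ℕ) : ∀ k, Str k
  | 0 => ()
  | k + 1 => (restr x k, decide (k ∈ x))

theorem restr_eq_of_le {x y : Set ℕ} {k l : ℕ} (hkl : k ≤ l) (h : restr x l = restr y l) :
    restr x k = restr y k := by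
  induction l, hkl using Nat.le_induction with
  | base => exact h
  | succ l _ ih => exact ih (congrArg Prod.fst h)

theorem exists_restr_ne {x y : Set ℕ} (h : x ≠ y) : ∃ k, restr x k ≠ restr y k := by
  by_contra! H
  refine h (Set.ext fun i => ?_)
  have := congrArg Prod.snd (H (i + 1))
  simpa [restr] using this

theorem exists_forall_ge_injective_restr {J : Type*} [Finite J] {x : J → Set ℕ}
    (hx : Function.Injective x) :
    ∃ k, ∀ l, k ≤ l → Function.Injective fun j => restr (x j) l := by
  have := Fintype.ofFinite J
  have exists_ne : ∀ p : J × J, ∃ k, p.1 ≠ p.2 → restr (x p.1) k ≠ restr (x p.2) k := by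
    intro p
    by_cases hp : p.1 = p.2
    · exact ⟨0, fun h => absurd hp h⟩
    · exact (exists_restr_ne (hx.ne hp)).imp fun _ h _ => h
  choose k hk using exists_ne
  refine ⟨Finset.univ.sup k, fun l hl i j hij => ?_⟩
  by_contra hne
  exact hk (i, j) hne (restr_eq_of_le ((Finset.le_sup (Finset.mem_univ (i, j))).trans hl) hij)

theorem exists_mem_forall_restr_eq {N J : Type*} {c : ∀ k, Set (Str k → N)}
    (hc : ∀ k, ∀ v ∈ c (k + 1), ∀ σ : Str k → Bool, (fun s => v (s, σ s)) ∈ c k)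
    {x : J → Set ℕ} {k l : ℕ} (hkl : k ≤ l)
    (hx : ∀ l, k ≤ l → Function.Injective fun j => restr (x j) l) :
    ∀ v ∈ c l, ∃ v' ∈ c k, ∀ j, v' (restr (x j) k) = v (restr (x j) l) := by
  classical
  induction l, hkl using Nat.le_induction with
  | base => exact fun v hv => ⟨v, hv, fun _ => rfl⟩
  | succ l hl ih =>
    intro v hv
    let σ : Str l → Bool :=
      Function.extend (fun j => restr (x j) l) (fun j => decide (l ∈ x j)) fun _ => false
    obtain ⟨v', hv', h⟩ := ih _ (hc l v hv σ)
    refine ⟨v', hv', fun j => ?_⟩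
    have : σ (restr (x j) l) = decide (l ∈ x j) := (hx l hl).extend_apply _ _ j
    rw [h j, this]
    rfl

variable {N : Type*} [arith.Structure N]

/-- A sequence of sets of `n`-tuples is unavoidable if every large definable set of tuples has a
large subset on which, for a given choice of `n` coordinates, some member of the sequence holds. -/
def Unavoidable {n : ℕ} (P : ℕ → Set (Fin n → N)) : Prop :=
  ∀ (S : Type) [Finite S] (D : Set (S → N)), Set.univ.Definable arith D → Large digitB D →
    ∀ s : Fin n → S, Function.Injective s → ∃ i, Large digitB {v | v ∈ D ∧ v ∘ s ∈ P i}

theorem Unavoidable.exists_large_subset {n : ℕ} {P : ℕ → Set (Fin n → N)} (hP : Unavoidable P)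
    (hPdef : ∀ i, Set.univ.Definable arith (P i)) {S : Type} [Finite S] {D : Set (S → N)}
    (hDdef : Set.univ.Definable arith D) (hD : Large digitB D) :
    ∃ D' ⊆ D, Set.univ.Definable arith D' ∧ Large digitB D' ∧
      ∀ s : Fin n → S, Function.Injective s → ∃ i, ∀ v ∈ D', v ∘ s ∈ P i := by
  suffices ∀ T : Set (Fin n → S), T.Finite → ∃ D' ⊆ D, Set.univ.Definable arith D' ∧
      Large digitB D' ∧ ∀ s ∈ T, Function.Injective s → ∃ i, ∀ v ∈ D', v ∘ s ∈ P i by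
    simpa only [Set.mem_univ, true_imp_iff] using this Set.univ Set.finite_univ
  intro T hT
  induction T, hT using Set.Finite.induction_on with
  | empty => exact ⟨D, subset_rfl, hDdef, hD, by simp⟩
  | @insert s T _ _ ih =>
    obtain ⟨D', hD'D, hD'def, hD', hD'P⟩ := ih
    by_cases hs : Function.Injective s
    · obtain ⟨i, hi⟩ := hP S D' hD'def hD' s hs
      refine ⟨_, fun v hv => hD'D hv.1, hD'def.inter ((hPdef i).preimage_comp s), hi, ?_⟩
      rintro t (rfl | ht) hinj
      · exact ⟨i, fun v hv => hv.2⟩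
      · exact (hD'P t ht hinj).imp fun _ h v hv => h v hv.1
    · refine ⟨D', hD'D, hD'def, hD', ?_⟩
      rintro t (rfl | ht) hinj
      · exact absurd hinj hs
      · exact hD'P t ht hinj

/-- The forcing conditions of length `k`: large definable sets of tuples indexed by the strings of
length `k`. -/
structure Condition_s6 (N : Type*) [arith.Structure N] (k : ℕ) where
  carrier : Set (Str k → N)
  definable : Set.univ.Definable arith carrier
  large : Large digitB carrier

theorem Condition_s6.exists_extension {k : ℕ} (c : Condition_s6 N k) {n : ℕ} {P : ℕ → Set (Fin n → N)}
    (hP : Unavoidable P) (hPdef : ∀ i, Set.univ.Definable arith (P i)) :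
    ∃ c' : Condition_s6 N (k + 1),
      (∀ v ∈ c'.carrier, ∀ σ : Str k → Bool, (fun s => v (s, σ s)) ∈ c.carrier) ∧
      ∀ s : Fin n → Str (k + 1), Function.Injective s → ∃ i, ∀ v ∈ c'.carrier, v ∘ s ∈ P i := by
  have hdef : Set.univ.Definable arith
      {v : Str k × Bool → N | ∀ σ : Str k → Bool, (fun s => v (s, σ s)) ∈ c.carrier} :=
    DefinablePred.forall_finite fun σ => c.definable.preimage_comp fun s => (s, σ s)
  obtain ⟨D', hD', hD'def, hD'large, hD'P⟩ := hP.exists_large_subset (S := Str k × Bool) hPdef hdef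
    c.large.double
  exact ⟨⟨D', hD'def, hD'large⟩, hD', hD'P⟩

theorem exists_forall_eventually_mem [PAModel N] {𝓡 : Set (Σ n, ℕ → Set (Fin n → N))}
    (h𝓡 : 𝓡.Countable) (hP : ∀ R ∈ 𝓡, Unavoidable R.2)
    (hPdef : ∀ R ∈ 𝓡, ∀ i, Set.univ.Definable arith (R.2 i)) :
    ∃ d : ∀ k, Str k → N, ∀ R ∈ 𝓡, ∀ x : Fin R.1 → Set ℕ, Function.Injective x →
      ∃ i, ∀ᶠ k in Filter.atTop, (fun j => d k (restr (x j) k)) ∈ R.2 i := by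
  rcases 𝓡.eq_empty_or_nonempty with rfl | hne
  · exact ⟨fun _ _ => 0, by simp⟩
  obtain ⟨g, rfl⟩ := h𝓡.exists_eq_range hne
  simp only [Set.forall_mem_range] at hP hPdef ⊢
  choose next next_extends next_meets using fun (k : ℕ) (c : Condition_s6 N k) =>
    c.exists_extension (hP k.unpair.1) (hPdef k.unpair.1)
  let c : ∀ k, Condition_s6 N k := fun k => Nat.rec
    ⟨Set.univ, Set.definable_univ, large_univ PAModel.digits_digitB_surjective⟩ next k
  have c_nonempty : ∀ k, (c k).carrier.Nonempty := fun k =>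
    have ⟨_, hK⟩ := (c k).large
    (hK 0).nonempty
  choose d hd using c_nonempty
  refine ⟨d, fun r x hx => ?_⟩
  obtain ⟨k₀, hk₀⟩ := exists_forall_ge_injective_restr hx
  set k := Nat.pair r k₀ with hk
  have hk₀k : k₀ ≤ k + 1 := (Nat.right_le_pair r k₀).trans k.le_succ
  have meets := next_meets k (c k)
  rw [hk, Nat.unpair_pair, ← hk] at meets
  obtain ⟨i, hi⟩ := meets (fun j => restr (x j) (k + 1)) (hk₀ _ hk₀k)
  refine ⟨i, Filter.eventually_atTop.2 ⟨k + 1, fun l hl => ?_⟩⟩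
  obtain ⟨v', hv', h⟩ := exists_mem_forall_restr_eq (c := fun k => (c k).carrier)
    (fun k => next_extends k (c k)) hl (fun l hl => hk₀ l (hk₀k.trans hl)) _ (hd l)
  simpa only [Function.comp_def, h] using hi v' hv'

end Fusion

section Generic

variable {N : Type*} [arith.Structure N] {α : Type*}

/-- A family of sequences of elements of `N` is generic if, for every function `G` definable in `N`,
the value of `G` along finitely many sequences of the family eventually differs, in some fixed
digit, from each set in `A` and from each of the other sequences. -/
def IsGeneric (A : Set (Set ℕ)) (b : α → ℕ → N) : Prop :=
  ∀ (t : Finset α) (G : (t → N) → N), Set.univ.DefinableFun arith G →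
    (∀ a ∈ A, ∃ i, ∀ᶠ k in Filter.atTop, ¬ (digitB (G fun x => b x k) i ↔ i ∈ a)) ∧
    ∀ x₀ ∉ t, ∃ i, ∀ᶠ k in Filter.atTop, ¬ (digitB (G fun x => b x k) i ↔ digitB (b x₀ k) i)

theorem unavoidable_digit_ne {n : ℕ} (G : (Fin n → N) → N) :
    Unavoidable fun i => {u : Fin (n + 1) → N |
      ¬ (digitB (G fun j => u j.succ) i ↔ digitB (u 0) i)} := by
  intro S _ D _ hD s hs
  refine hD.exists_digit_ne (s 0) (fun v i => digitB (G fun j => v (s j.succ)) i)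
    fun v w h => ?_
  have : (fun j : Fin n => v (s j.succ)) = fun j => w (s j.succ) :=
    funext fun j => h _ (hs.ne (Fin.succ_ne_zero j))
  simp only [this]

variable [PAModel N]

theorem definablePred_digitB {f : (α → N) → N} (hf : Set.univ.DefinableFun arith f) (i : ℕ) :
    DefinablePred Set.univ arith fun v => digitB (f v) i := by
  simp only [PAModel.digitB_iff]
  fun_prop

theorem unavoidable_not_mem (hN : ∃ x : N, ¬ IsStd x) {n : ℕ} {G : (Fin n → N) → N}
    (hG : Set.univ.DefinableFun arith G) {a : Set ℕ} (ha : a ∉ SSy N) :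
    Unavoidable fun i => {u | ¬ (digitB (G u) i ↔ i ∈ a)} := by
  intro S _ D hDdef hD s _
  by_contra H
  rw [not_exists] at H
  refine ha (PAModel.mem_SSy_of_not_large (Q := fun v p => PAModel.Dig (G (v ∘ s)) p) hN hDdef hD
    (PAModel.definablePred_dig (hG.comp fun j => .proj _) (.proj _)) fun i hi => H i ?_)
  simpa only [Function.comp_def, PAModel.digitB_iff, Set.mem_ofPred_eq] using hi

theorem exists_isGeneric [Countable N] (hN : ∃ x : N, ¬ IsStd x) {A : Set (Set ℕ)}
    (hA : A.Countable) (hAN : ∀ a ∈ A, a ∉ SSy N) :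
    ∃ b : Set ℕ → ℕ → N, IsGeneric A b := by
  have := hA.to_subtype
  have (n : ℕ) : Countable {G : (Fin n → N) → N // Set.univ.DefinableFun arith G} :=
    (countable_setOf_definableFun (Fin n) Set.univ).to_subtype
  let avoidSet (p : (Σ n, {G : (Fin n → N) → N // Set.univ.DefinableFun arith G}) × A) :
      Σ n, ℕ → Set (Fin n → N) := ⟨p.1.1, fun i => {u | ¬ (digitB (p.1.2.1 u) i ↔ i ∈ p.2.1)}⟩
  let avoidElt (p : Σ n, {G : (Fin n → N) → N // Set.univ.DefinableFun arith G}) :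
      Σ n, ℕ → Set (Fin n → N) :=
    ⟨p.1 + 1, fun i => {u | ¬ (digitB (p.2.1 fun j => u j.succ) i ↔ digitB (u 0) i)}⟩
  obtain ⟨d, hd⟩ := exists_forall_eventually_mem (𝓡 := Set.range avoidSet ∪ Set.range avoidElt)
    ((Set.countable_range _).union (Set.countable_range _))
    (by
      rintro _ (⟨p, rfl⟩ | ⟨p, rfl⟩)
      exacts [unavoidable_not_mem hN p.1.2.2 (hAN _ p.2.2), unavoidable_digit_ne _])
    (by
      rintro _ (⟨p, rfl⟩ | ⟨p, rfl⟩) i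
      · exact (DefinablePred.iff (definablePred_digitB p.1.2.2 i) (.const _)).not
      · exact (DefinablePred.iff (definablePred_digitB (p.2.2.comp fun j => .proj _) i)
          (definablePred_digitB (.proj _) i)).not)
  refine ⟨fun x k => d k (restr x k), fun t G hG => ?_⟩
  let x (j : Fin t.card) : Set ℕ := t.equivFin.symm j
  have hx : Function.Injective x := Subtype.val_injective.comp t.equivFin.symm.injective
  let G' (u : Fin t.card → N) : N := G fun y => u (t.equivFin y)
  have hG' : Set.univ.DefinableFun arith G' := hG.comp fun y => .proj _
  have G'_eq k : (G' fun j => d k (restr (x j) k)) = G fun y => d k (restr y.1 k) := by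
    simp only [G', x, Equiv.symm_apply_apply]
  refine ⟨fun a ha => ?_, fun x₀ hx₀ => ?_⟩
  · simpa only [← G'_eq] using! hd _ (.inl ⟨(⟨_, G', hG'⟩, ⟨a, ha⟩), rfl⟩) x hx
  · have hx₀x : x₀ ∉ Set.range x := by
      rintro ⟨j, rfl⟩
      exact hx₀ (t.equivFin.symm j).2
    simpa only [← G'_eq] using!
      hd _ (.inr ⟨⟨_, G', hG'⟩, rfl⟩) (Fin.cons x₀ x) (Fin.cons_injective_iff.2 ⟨hx₀x, hx⟩)

end Generic

section Transfer

variable {M M' : Type*} [arith.Structure M'] [arith.Structure M] {α : Type*}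

/-- The term `s + t`. -/
def addTerm (s t : arith.Term α) : arith.Term α := Functions.apply₂ (L := arith) arithFunc.add s t

/-- The term `s · t`. -/
def mulTerm (s t : arith.Term α) : arith.Term α := Functions.apply₂ (L := arith) arithFunc.mul s t

/-- The formula `s < t`. -/
def ltFormula (s t : arith.Term α) : arith.Formula α :=
  Relations.formula₂ (L := arith) arithRel.lt s t

theorem realize_addTerm (s t : arith.Term α) (v : α → M) :
    (addTerm s t).realize v = addM (s.realize v) (t.realize v) :=
  Term.realize_functions_apply₂

theorem realize_mulTerm (s t : arith.Term α) (v : α → M) :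
    (mulTerm s t).realize v = mulM (s.realize v) (t.realize v) :=
  Term.realize_functions_apply₂

theorem realize_ltFormula (s t : arith.Term α) (v : α → M) :
    (ltFormula s t).Realize v ↔ ltM (s.realize v) (t.realize v) :=
  Formula.realize_rel₂

/-- The term denoting a numeral. -/
def numeralTerm (α : Type*) : ℕ → arith.Term α
  | 0 => Constants.term (L := arith) arithFunc.zero
  | n + 1 => addTerm (numeralTerm α n) (Constants.term (L := arith) arithFunc.one)

theorem realize_numeralTerm (n : ℕ) (v : α → M) :
    (numeralTerm α n).realize v = numeral M n := by
  induction n with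
  | zero => exact congrArg (Structure.funMap (L := arith) arithFunc.zero) (Subsingleton.elim _ _)
  | succ n ih =>
    rw [numeralTerm, realize_addTerm, ih, numeral]
    exact congrArg (fun w => addM _ (Structure.funMap (L := arith) arithFunc.one w))
      (Subsingleton.elim _ _)

/-- The formula expressing that the `i`-th binary digit is `1`. -/
noncomputable def digitFormula (i : ℕ) : arith.Formula Unit :=
  Formula.iExs (Fin 2) <|
    (Term.var (Sum.inl ())).equal (addTerm
      (mulTerm (Term.var (Sum.inr 0)) (numeralTerm _ (2 ^ (i + 1))))
      (addTerm (numeralTerm _ (2 ^ i)) (Term.var (Sum.inr 1)))) ⊓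
    ltFormula (Term.var (Sum.inr 1)) (numeralTerm _ (2 ^ i))

theorem realize_digitFormula {i : ℕ} {v : Unit → M} :
    (digitFormula i).Realize v ↔ digitB (v ()) i := by
  simp only [digitFormula, Formula.realize_iExs, Formula.realize_inf, Formula.realize_equal,
    realize_addTerm, realize_mulTerm, realize_ltFormula, realize_numeralTerm, Term.realize_var,
    Sum.elim_inl, Sum.elim_inr]
  constructor
  · rintro ⟨u, h⟩
    exact ⟨u 0, u 1, h⟩
  · rintro ⟨u, v, h⟩
    exact ⟨![u, v], h⟩

theorem map_numeral (f : M ↪ₑ[arith] M') (n : ℕ) : f (numeral M n) = numeral M' n := by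
  have := f.map_formula ((Term.var ()).equal (numeralTerm Unit n)) fun _ => numeral M n
  simp only [Formula.realize_equal, realize_numeralTerm, Term.realize_var, iff_true] at this
  exact this

theorem isStd_map_iff (f : M ↪ₑ[arith] M') {x : M} : IsStd (f x) ↔ IsStd x := by
  simp only [IsStd, ← map_numeral f, f.injective.eq_iff]

/-- The set of natural numbers coded by the binary digits of `x`. -/
def digitSet (x : M) : Set ℕ := {i | digitB x i}

theorem digitSet_map (f : M ↪ₑ[arith] M') (x : M) : digitSet (f x) = digitSet x := by
  ext i
  have := f.map_formula (digitFormula i) fun _ => x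
  rwa [realize_digitFormula, realize_digitFormula] at this

theorem mem_SSy_iff {a : Set ℕ} : a ∈ SSy M ↔ ∃ x : M, ¬ IsStd x ∧ digitSet x = a := by
  simp only [digitSet, Set.ext_iff, Set.mem_ofPred_eq, iff_comm (b := _ ∈ a)]
  rfl

theorem mem_SSy_elementarySubstructure_iff {S : arith.ElementarySubstructure M} {a : Set ℕ} :
    a ∈ SSy S ↔ ∃ x ∈ S, ¬ IsStd x ∧ digitSet x = a := by
  rw [mem_SSy_iff, Subtype.exists]
  refine exists_congr fun x => ⟨fun ⟨hx, h⟩ => ⟨hx, ?_⟩, fun ⟨hx, h⟩ => ⟨hx, ?_⟩⟩ <;>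
    simpa only [← isStd_map_iff S.subtype, ← digitSet_map S.subtype] using! h

theorem SSy_subset_of_range_subset (f : M ↪ₑ[arith] M') {S : arith.ElementarySubstructure M'}
    (h : Set.range f ⊆ S) : SSy M ⊆ SSy S := by
  intro a ha
  obtain ⟨x, hx, rfl⟩ := mem_SSy_iff.1 ha
  exact mem_SSy_elementarySubstructure_iff.2
    ⟨f x, h ⟨x, rfl⟩, mt (isStd_map_iff f).1 hx, digitSet_map f x⟩

theorem SSy_mono {S T : arith.ElementarySubstructure M} (h : (S : Set M) ⊆ T) : SSy S ⊆ SSy T :=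
  SSy_subset_of_range_subset S.subtype (by rintro _ ⟨x, rfl⟩; exact h x.2)

theorem mk_SSy_le (M : Type) [arith.Structure M] : Cardinal.mk (SSy M) ≤ Cardinal.mk M := by
  refine (Cardinal.mk_le_mk_of_subset (t := Set.range (digitSet (M := M))) fun a ha => ?_).trans
    Cardinal.mk_range_le
  obtain ⟨x, -, hx⟩ := mem_SSy_iff.1 ha
  exact ⟨x, hx⟩

theorem aleph0_le_mk_SSy [PAModel M] (hM : ∃ x : M, ¬ IsStd x) :
    Cardinal.aleph0 ≤ Cardinal.mk (SSy M) := by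
  have hsingleton (m : ℕ) : {m} ∈ SSy M := by
    convert PAModel.mem_SSy_of_definablePred (P := fun p => p = ((2 ^ m : ℕ) : M)) hM
      (by fun_prop) using 1
    ext i
    simp only [Set.mem_singleton_iff, Set.mem_ofPred_eq, Nat.cast_inj]
    exact (Nat.pow_right_injective le_rfl).eq_iff.symm
  rw [← Cardinal.mk_nat]
  exact Cardinal.mk_le_of_injective (f := fun m => (⟨{m}, hsingleton m⟩ : SSy M))
    fun m n h => Set.singleton_injective (Subtype.mk.inj h)

end Transfer

section DefinableChoice

theorem PAModel.exists_definableFun_of_definablePred {M : Type*} [arith.Structure M] [PAModel M]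
    {β : Type*} [Finite β] {P : (β → M) → M → Prop}
    (hP : DefinablePred Set.univ arith fun w : Option β → M => P (fun i => w (some i)) (w none)) :
    ∃ G : (β → M) → M, Set.univ.DefinableFun arith G ∧ ∀ u, (∃ y, P u y) → P u (G u) := by
  let R (u : β → M) (y : M) : Prop := (∃ z, P u z) → P u y
  have hR : DefinablePred Set.univ arith fun w : Option β → M => R (fun i => w (some i)) (w none) :=
    .imp (.exists (hP.reindex fun o => o.elim none fun i => some (some i))) hP
  have exists_least (u : β → M) : ∃ y, R u y ∧ ∀ z, R u z → y ≤ z := by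
    refine PAModel.exists_least (hR.subst (F := fun o v => o.elim (v 0) u) ?_) ?_
    · rintro (_ | i)
      exacts [.proj _, definableFun_const_univ _]
    · by_cases h : ∃ z, P u z
      · exact h.imp fun _ hz _ => hz
      · exact ⟨0, fun h' => absurd h' h⟩
  choose G hG hG_least using exists_least
  have tupleGraph_eq : G.tupleGraph = {w | R (fun i => w (some i)) (w none) ∧
      ∀ z, R (fun i => w (some i)) z → w none ≤ z} := by
    ext w
    refine ⟨fun (h : G (fun i => w (some i)) = w none) => ?_, fun ⟨h, h_least⟩ => ?_⟩
    · rw [Set.mem_ofPred_eq, ← h]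
      exact ⟨hG _, hG_least _⟩
    · exact (hG_least _ _ h).antisymm (h_least _ (hG _))
  refine ⟨G, ?_, hG⟩
  rw [Set.DefinableFun, tupleGraph_eq]
  exact DefinablePred.and hR
    (.forall (.imp (hR.reindex fun o => o.elim none fun i => some (some i)) (by fun_prop)))

end DefinableChoice

section Ultrapower

/-- The ultrapower of `N` by a non-principal ultrafilter on `ℕ`. -/
abbrev UPow (N : Type*) : Type _ := (Filter.hyperfilter ℕ : Filter ℕ).Product fun _ => N

/-- The class of a sequence in the ultrapower. -/
noncomputable def cls {N : Type*} (f : ℕ → N) : UPow N := f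

theorem cls_surjective {N : Type*} : Function.Surjective (cls (N := N)) := Quotient.exists_rep

variable {N : Type*} [arith.Structure N]

theorem realize_cls [Nonempty N] {β : Type*} (φ : arith.Formula β) (x : β → ℕ → N) :
    (φ.Realize fun i => cls (x i)) ↔
      ∀ᶠ k in Filter.hyperfilter ℕ, φ.Realize fun i => x i k :=
  Ultraproduct.realize_formula_cast φ x

theorem digitB_cls_iff [Nonempty N] {f : ℕ → N} {i : ℕ} :
    digitB (cls f) i ↔ ∀ᶠ k in Filter.hyperfilter ℕ, digitB (f k) i := by
  have := realize_cls (digitFormula i) fun _ => f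
  simpa only [realize_digitFormula] using this

/-- The diagonal embedding of `N` in its ultrapower. -/
noncomputable def diag (N : Type*) [arith.Structure N] [Nonempty N] : N ↪ₑ[arith] UPow N where
  toFun y := cls fun _ => y
  map_formula' n φ x := by
    have := realize_cls φ fun i _ => x i
    rwa [Filter.eventually_const] at this

end Ultrapower

section Hull

variable {N : Type*} [arith.Structure N] {α : Type*} {b : α → ℕ → N} {X Y : Set α}

/-- The classes of the sequences obtained from finitely many sequences `b x`, with `x ∈ X`, by
applying pointwise a function definable in `N`. -/
def hull (b : α → ℕ → N) (X : Set α) : Set (UPow N) :=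
  {c | ∃ t : Finset α, (t : Set α) ⊆ X ∧ ∃ G : (t → N) → N,
    Set.univ.DefinableFun arith G ∧ c = cls fun k => G fun x => b x k}

theorem hull_mono (h : X ⊆ Y) : hull b X ⊆ hull b Y :=
  fun _ ⟨t, ht, hc⟩ => ⟨t, ht.trans h, hc⟩

theorem cls_mem_hull {x : α} (hx : x ∈ X) : cls (b x) ∈ hull b X :=
  ⟨{x}, by simpa using hx, fun u => u ⟨x, Finset.mem_singleton_self x⟩, .proj _, rfl⟩

theorem range_diag_subset_hull [Nonempty N] : Set.range (diag N) ⊆ hull b X := by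
  rintro _ ⟨y, rfl⟩
  exact ⟨∅, by simp, fun _ => y, definableFun_const_univ y, rfl⟩

theorem exists_forall_eq_cls {ι : Type*} [Finite ι] {c : ι → UPow N} (hc : ∀ i, c i ∈ hull b X) :
    ∃ t : Finset α, (t : Set α) ⊆ X ∧ ∃ G : ι → (t → N) → N,
      ∀ i, Set.univ.DefinableFun arith (G i) ∧ c i = cls fun k => G i fun x => b x k := by
  classical
  have := Fintype.ofFinite ι
  choose t ht G hG hcG using hc
  refine ⟨Finset.univ.biUnion t, by simpa using ht,
    fun i u => G i fun x => u ⟨x, Finset.mem_biUnion.2 ⟨i, Finset.mem_univ i, x.2⟩⟩,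
    fun i => ⟨(hG i).comp fun x => .proj _, hcG i⟩⟩

theorem exists_definablePred_forall_cls_mem_iff [Nonempty N] {D : Set (UPow N)}
    (hD : (hull b X).Definable₁ arith D) :
    ∃ t : Finset α, (t : Set α) ⊆ X ∧ ∃ P : (t → N) → N → Prop,
      (DefinablePred Set.univ arith fun w : Option t → N => P (fun x => w (some x)) (w none)) ∧
      ∀ f, cls f ∈ D ↔ ∀ᶠ k in Filter.hyperfilter ℕ, P (fun x => b x k) (f k) := by
  obtain ⟨T, hT, hD⟩ := Set.definable_iff_finitely_definable.1 hD
  obtain ⟨φ, hφ⟩ := Set.definable_iff_exists_formula_sum.1 hD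
  obtain ⟨t, ht, G, hG⟩ := exists_forall_eq_cls (c := fun p : (T : Set (UPow N)) => p.1)
    fun p => hT p.2
  refine ⟨t, ht, fun u y => φ.Realize (Sum.elim (fun p => G p u) fun _ => y), ?_, fun f => ?_⟩
  · have hdef := (definablePred_realize (A := Set.univ) φ).subst
      (F := Sum.elim (fun p (w : Option t → N) => G p fun x => w (some x)) fun _ w => w none) ?_
    · convert! hdef using 3
      ext (p | _) <;> rfl
    · rintro (p | _)
      · exact Set.DefinableFun.comp (g := fun w x => w (some x)) (fun x => .proj _) (hG p).1
      · exact .proj _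
  · have h_cls : (Sum.elim Subtype.val fun _ => cls f : _ ⊕ Fin 1 → UPow N) =
        fun i => cls fun k => (Sum.elim (fun p => G p fun x => b x k) fun _ => f k : _ → N) i := by
      ext (p | _)
      exacts [(hG p).2, rfl]
    have cls_mem_iff : cls f ∈ D ↔ φ.Realize (Sum.elim Subtype.val fun _ => cls f) :=
      Set.ext_iff.1 hφ fun _ => cls f
    rw [cls_mem_iff, h_cls, realize_cls]

theorem meetsDefinable_hull [PAModel N] (b : α → ℕ → N) (X : Set α) :
    arith.MeetsDefinable (hull b X) := by
  rintro D ⟨c, hcD⟩ hD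
  obtain ⟨t, ht, P, hP, cls_mem_iff⟩ := exists_definablePred_forall_cls_mem_iff hD
  obtain ⟨G, hG, hGP⟩ := PAModel.exists_definableFun_of_definablePred hP
  refine ⟨cls fun k => G fun x => b x k, ?_, t, ht, G, hG, rfl⟩
  obtain ⟨f, rfl⟩ := cls_surjective c
  rw [cls_mem_iff] at hcD ⊢
  filter_upwards [hcD] with k hk using hGP _ ⟨_, hk⟩

end Hull

section HullSubstructure

variable {N : Type*} [arith.Structure N] [PAModel N] {α : Type*} {b : α → ℕ → N} {X : Set α}

/-- The hull as an elementary substructure of the ultrapower; for a generic family `b`, this is the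
model `M_X`. -/
noncomputable def hullSubstructure (b : α → ℕ → N) (X : Set α) :
    arith.ElementarySubstructure (UPow N) :=
  (meetsDefinable_hull b X).toElementarySubstructure

theorem coe_hullSubstructure (b : α → ℕ → N) (X : Set α) :
    (hullSubstructure b X : Set (UPow N)) = hull b X :=
  (meetsDefinable_hull b X).closure_eq_self

theorem hullSubstructure_mono {Y : Set α} (h : X ⊆ Y) :
    (hullSubstructure b X : Set (UPow N)) ⊆ hullSubstructure b Y := by
  rw [coe_hullSubstructure, coe_hullSubstructure]
  exact hull_mono h

theorem mem_hullSubstructure {c : UPow N} : c ∈ hullSubstructure b X ↔ c ∈ hull b X := by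
  rw [← SetLike.mem_coe, coe_hullSubstructure]

theorem range_diag_subset_hullSubstructure :
    Set.range (diag N) ⊆ (hullSubstructure b X : Set (UPow N)) :=
  range_diag_subset_hull.trans (coe_hullSubstructure b X).ge

end HullSubstructure

theorem not_eventually_iff_eventually {ι : Type*} {l : Ultrafilter ι} {p q : ι → Prop}
    (h : ∀ᶠ k in l, ¬ (p k ↔ q k)) : ¬ ((∀ᶠ k in l, p k) ↔ ∀ᶠ k in l, q k) := by
  simpa only [iff_def, Ultrafilter.eventually_not, Filter.eventually_and,
    Ultrafilter.eventually_imp] using h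

namespace IsGeneric

variable {N : Type*} [arith.Structure N] [PAModel N] {α : Type*} {A : Set (Set ℕ)}
  {b : α → ℕ → N} {X : Set α} {c : UPow N} {x : α}

theorem digitSet_notMem (hb : IsGeneric A b) (hc : c ∈ hull b X) : digitSet c ∉ A := by
  obtain ⟨t, -, G, hG, rfl⟩ := hc
  intro ha
  obtain ⟨i, hi⟩ := (hb t G hG).1 _ ha
  have := not_eventually_iff_eventually (hi.filter_mono Nat.hyperfilter_le_atTop)
  rw [← digitB_cls_iff, Filter.eventually_const] at this
  exact this Iff.rfl

theorem digitSet_ne (hb : IsGeneric A b) (hc : c ∈ hull b X) (hx : x ∉ X) :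
    digitSet c ≠ digitSet (cls (b x)) := by
  obtain ⟨t, ht, G, hG, rfl⟩ := hc
  intro h
  obtain ⟨i, hi⟩ := (hb t G hG).2 x fun hxt => hx (ht hxt)
  have := not_eventually_iff_eventually (hi.filter_mono Nat.hyperfilter_le_atTop)
  rw [← digitB_cls_iff, ← digitB_cls_iff] at this
  exact this (Set.ext_iff.1 h i)

theorem digitSet_cls_injective (hb : IsGeneric A b) :
    Function.Injective fun x => digitSet (cls (b x)) := fun x y h => by
  by_contra hxy
  exact hb.digitSet_ne (cls_mem_hull (Set.mem_singleton x)) (Ne.symm hxy) h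

theorem not_isStd_cls (hb : IsGeneric A b) (x : α) : ¬ IsStd (cls (b x)) := by
  rintro ⟨n, hn⟩
  refine hb.digitSet_ne (X := ∅) (range_diag_subset_hull ⟨numeral N n, rfl⟩) id ?_ (x := x)
  rw [map_numeral, hn]

theorem digitSet_cls_mem_SSy_iff (hb : IsGeneric A b) :
    digitSet (cls (b x)) ∈ SSy (hullSubstructure b X) ↔ x ∈ X := by
  rw [mem_SSy_elementarySubstructure_iff]
  refine ⟨fun ⟨c, hc, _, h⟩ => ?_, fun hx =>
    ⟨_, mem_hullSubstructure.2 (cls_mem_hull hx), hb.not_isStd_cls x, rfl⟩⟩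
  by_contra hx
  exact hb.digitSet_ne (mem_hullSubstructure.1 hc) hx h

theorem disjoint_SSy (hb : IsGeneric A b) (X : Set α) :
    Disjoint A (SSy (hullSubstructure b X)) := by
  refine Set.disjoint_left.2 fun a ha h => ?_
  obtain ⟨c, hc, -, rfl⟩ := mem_SSy_elementarySubstructure_iff.1 h
  exact hb.digitSet_notMem (mem_hullSubstructure.1 hc) ha

theorem subset_of_SSy_subset (hb : IsGeneric A b) {Y : Set α}
    (h : SSy (hullSubstructure b X) ⊆ SSy (hullSubstructure b Y)) : X ⊆ Y :=
  fun _ hx => hb.digitSet_cls_mem_SSy_iff.1 (h (hb.digitSet_cls_mem_SSy_iff.2 hx))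

end IsGeneric

section Cardinality

theorem mk_finset_le_max (α : Type*) :
    Cardinal.mk (Finset α) ≤ max Cardinal.aleph0 (Cardinal.mk α) := by
  classical
  exact (Cardinal.mk_le_of_surjective List.toFinset_surjective).trans (Cardinal.mk_list_le_max α)

theorem mk_hull_le.{u} {N α : Type u} [arith.Structure N] [Countable N]
    (b : α → ℕ → N) (X : Set α) : Cardinal.mk (hull b X) ≤ max Cardinal.aleph0 (Cardinal.mk X) := by
  classical
  let values (s : Finset X) : Set (UPow N) :=
    (fun G : (s.map (.subtype _) → N) → N => cls fun k => G fun x => b x k) ''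
      {G | Set.univ.DefinableFun arith G}
  have hull_subset : hull b X ⊆ ⋃ s, values s := by
    rintro _ ⟨t, ht, G, hG, rfl⟩
    obtain ⟨s, rfl⟩ : ∃ s : Finset X, s.map (.subtype _) = t :=
      ⟨t.subtype (· ∈ X), Finset.subtype_map_of_mem ht⟩
    exact Set.mem_iUnion.2 ⟨s, G, hG, rfl⟩
  have mk_values_le (s : Finset X) : Cardinal.mk (values s) ≤ Cardinal.aleph0 :=
    ((countable_setOf_definableFun _ _).image _).le_aleph0
  calc Cardinal.mk (hull b X)
      ≤ Cardinal.mk (Finset X) * ⨆ s, Cardinal.mk (values s) :=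
        (Cardinal.mk_le_mk_of_subset hull_subset).trans (Cardinal.mk_iUnion_le _)
    _ ≤ max Cardinal.aleph0 (Cardinal.mk X) * Cardinal.aleph0 :=
        mul_le_mul' (mk_finset_le_max X) (ciSup_le' mk_values_le)
    _ = max Cardinal.aleph0 (Cardinal.mk X) := Cardinal.mul_aleph0_eq (le_max_left _ _)

theorem mk_hullSubstructure_le.{u} {N α : Type u} [arith.Structure N] [PAModel N]
    [Countable N] (b : α → ℕ → N) (X : Set α) :
    Cardinal.mk (hullSubstructure b X) ≤ max Cardinal.aleph0 (Cardinal.mk X) :=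
  (Cardinal.mk_congr (Equiv.setCongr (coe_hullSubstructure b X))).trans_le (mk_hull_le b X)

theorem IsGeneric.max_le_mk_SSy {N α : Type} [arith.Structure N] [PAModel N]
    {A : Set (Set ℕ)} {b : α → ℕ → N} (hb : IsGeneric A b) (hN : ∃ x : N, ¬ IsStd x) (X : Set α) :
    max Cardinal.aleph0 (Cardinal.mk X) ≤ Cardinal.mk (SSy (hullSubstructure b X)) := by
  refine max_le ?_ (Cardinal.mk_le_of_injective (f := fun x : X =>
    (⟨_, hb.digitSet_cls_mem_SSy_iff.2 x.2⟩ : SSy (hullSubstructure b X))) fun x y h =>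
      Subtype.ext (hb.digitSet_cls_injective (Subtype.mk.inj h)))
  exact (aleph0_le_mk_SSy hN).trans (Cardinal.mk_le_mk_of_subset
    (SSy_subset_of_range_subset (diag N) range_diag_subset_hullSubstructure))

end Cardinality

end Arith

open Arith in
/-- Strengthening of the previous statement: given in addition a countable set
`A ⊆ 2^ω − SSy(N)`, the family can be chosen with `A ∩ SSy(M_X) = ∅` for all `X`. -/
theorem statement_6 (N : Type) [arith.Structure N] (hN : NonstandardModel N)
    (hNc : Countable N) (A : Set (Set ℕ)) (hA : A.Countable) (hAN : A ∩ SSy N = ∅) :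
    ∃ (N' : Type) (_ : arith.Structure N') (e : N ↪ₑ[arith] N')
      (Mfam : Set (Set ℕ) → arith.ElementarySubstructure N'),
      (∀ X : Set (Set ℕ), Set.range e ⊆ (Mfam X : Set N')) ∧
      (∀ X : Set (Set ℕ),
        Cardinal.mk (Mfam X) = max Cardinal.aleph0 (Cardinal.mk X) ∧
        Cardinal.mk (SSy (Mfam X)) = max Cardinal.aleph0 (Cardinal.mk X)) ∧
      (∀ X Y : Set (Set ℕ),
        (X ⊆ Y ↔ (Mfam X : Set N') ⊆ (Mfam Y : Set N')) ∧
        (X ⊆ Y ↔ SSy (Mfam X) ⊆ SSy (Mfam Y))) ∧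
      (∀ X : Set (Set ℕ), A ∩ SSy (Mfam X) = ∅) := by
  have : PAModel N := ⟨hN.1⟩
  have hN' := PAModel.exists_not_isStd hN
  obtain ⟨b, hb⟩ := exists_isGeneric hN' hA fun a ha h => hAN.subset ⟨ha, h⟩
  refine ⟨UPow N, inferInstance, diag N, hullSubstructure b,
    fun _ => range_diag_subset_hullSubstructure, fun X => ?_, fun X Y => ⟨?_, ?_⟩,
    fun X => (hb.disjoint_SSy X).inter_eq⟩
  · have h₁ := hb.max_le_mk_SSy hN' X
    have h₂ := mk_SSy_le (hullSubstructure b X)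
    have h₃ := mk_hullSubstructure_le b X
    exact ⟨h₃.antisymm (h₁.trans h₂), (h₂.trans h₃).antisymm h₁⟩
  · exact ⟨hullSubstructure_mono, fun h => hb.subset_of_SSy_subset (SSy_mono h)⟩
  · exact ⟨fun h => SSy_mono (hullSubstructure_mono h), hb.subset_of_SSy_subset⟩
end

section
/- Let p⃗ = (p_i : i ∈ ω) be a descending sequence of conditions in the poset P with lim_i n_{p_i} = ∞, and let G_{p⃗} be the set of formulas φ(x_{f₁}, …, x_{f_k}) with f₁, …, f_k ∈ 2^ω such that the n_{p_i}-reduct of φ belongs to p_i for some i. Then G_{p⃗} is a type of N, i.e., every finite subset of G_{p⃗} is realized in N. -/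
open FirstOrder FirstOrder.Language

namespace Arith

variable {N : Type*} [arith.Structure N]

/-- Formulas with constants for all elements of `N`, in free variables `x_σ` indexed by
binary sequences `σ ∈ 2^n`. -/
abbrev CFormula (N : Type*) [arith.Structure N] (n : ℕ) : Type _ :=
  (arith[[N]]).Formula (Fin n → Bool)

/-- `d^k` for standard `k`. -/
def powStd (d : N) : ℕ → N
  | 0 => oneM N
  | k + 1 => mulM (powStd d k) d

/-- The binary sequence of length `n` coded by `j < 2^n`. -/
def binOfFin {n : ℕ} (j : Fin (2 ^ n)) : Fin n → Bool := fun i => j.val.testBit i.val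

/-- The code `∑_σ b_σ · d^(rank σ)` of a tuple `(b_σ : σ ∈ 2^n)` of elements below `d`,
in base `d`. -/
def tupleCode (d : N) {n : ℕ} (b : (Fin n → Bool) → N) : N :=
  (List.finRange (2 ^ n)).foldr
    (fun j acc => addM (mulM (b (binOfFin j)) (powStd d j.val)) acc) (zeroM N)

/-- `b` realizes all formulas in `fmls`. -/
def RealizesAll {n : ℕ} (fmls : Set (CFormula N n)) (b : (Fin n → Bool) → N) : Prop :=
  ∀ φ ∈ fmls, φ.Realize b

/-- The set of codes of tuples realizing `fmls` in `N`; this represents the internal set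
`p(N)` of realizations of a condition. -/
def realizationCodes (d : N) {n : ℕ} (fmls : Set (CFormula N n)) : Set N :=
  {e | ∃ b : (Fin n → Bool) → N, RealizesAll fmls b ∧ e = tupleCode d b}

/-- A condition: a finite type `p` of `N` in the variables `(x_σ : σ ∈ 2^{n_p})`
(with parameters from `N`, and no quantifiers over any `x_σ`), such that `p ⊢ x_σ < d`
(where `d = 2^a`), and such that for some positive rational `r = u/v`, internally in `N`,
`|p(N)| > r · d^(2^{n_p})`. -/
structure Condition (N : Type*) [arith.Structure N] (d : N) : Type _ where
  n : ℕ
  fmls : Set (CFormula N n)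
  finite : fmls.Finite
  realizable : ∃ b : (Fin n → Bool) → N, RealizesAll fmls b
  bounded : ∀ b : (Fin n → Bool) → N, RealizesAll fmls b → ∀ σ : Fin n → Bool, ltM (b σ) d
  large : ∃ (u v : ℕ) (c : N), 0 < u ∧ 0 < v ∧
    InternalCard (realizationCodes d fmls) c ∧
    ltM (mulM (numeral N u) (powStd d (2 ^ n))) (mulM (numeral N v) c)

/-- The `m`-reduct of a formula in the variables `(x_σ : σ ∈ 2^n)`: substitute
`x_{σ↾m}` for `x_σ`. -/
def reduct {n m : ℕ} (h : m ≤ n) (φ : CFormula N n) : CFormula N m :=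
  φ.relabel fun σ => fun i => σ (Fin.castLE h i)

/-- The order on conditions: `q ≤ p` iff `n_q ≥ n_p` and `q` contains every
`n_q`-ramification of every formula in `p` (i.e. every formula whose `n_p`-reduct lies
in `p`). -/
def CondLE {d : N} (q p : Condition N d) : Prop :=
  ∃ h : p.n ≤ q.n, ∀ ψ : CFormula N q.n, reduct h ψ ∈ p.fmls → ψ ∈ q.fmls

/-- Formulas in the variables `(x_f : f ∈ 2^ω)` with constants from `N`. -/
abbrev CFormulaInf (N : Type*) [arith.Structure N] : Type _ :=
  (arith[[N]]).Formula (ℕ → Bool)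

/-- The `m`-reduct of a formula in the variables `(x_f : f ∈ 2^ω)`: substitute
`x_{f↾m}` for `x_f`. -/
def reductInf {m : ℕ} (φ : CFormulaInf N) : CFormula N m :=
  φ.relabel fun f => fun i => f i.val

end Arith

/-!
Reducts compose, so passing to a stronger condition can only enlarge the set of formulas over `2^ω`
whose reduct the condition contains; a finite subset of the union of these sets along a descending
sequence is therefore contained in the set of a single `p_i`. All formulas in that set are realized
at once by setting `x_f := b (f ↾ n)`, where `n = n_{p_i}` and `b` realizes `p_i`.
-/

namespace Arith

section Relabel

variable {L : FirstOrder.Language} {α β γ : Type*}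

/- `BoundedFormula.relabel` turns `k` bound variables into `0 + k`, whereas `mapTermRel` keeps the
number `k` and satisfies functoriality laws in Mathlib. -/
theorem boundedFormula_relabel_inl_comp (g : α → β) {k : ℕ} (φ : L.BoundedFormula α k) :
    φ.relabel (Sum.inl ∘ g : α → β ⊕ Fin 0) =
      (φ.mapTermRel (fun _ => Term.relabel (Sum.map g id)) (fun _ => id) fun _ => id).castLE
        (zero_add k).ge := by
  have relabelAux_inl_comp (k : ℕ) :
      BoundedFormula.relabelAux (Sum.inl ∘ g : α → β ⊕ Fin 0) k =
        Sum.map id (Fin.castLE (zero_add k).ge) ∘ Sum.map g id := by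
    ext (x | i)
    · rfl
    · simp [BoundedFormula.relabelAux, Fin.ext_iff]
  induction φ with
  | falsum => rfl
  | equal => simp [BoundedFormula.relabel, BoundedFormula.mapTermRel, relabelAux_inl_comp]
  | rel =>
    simp only [BoundedFormula.relabel, BoundedFormula.mapTermRel, BoundedFormula.castLE,
      relabelAux_inl_comp, ← Term.relabel_comp_relabel]
    rfl
  | imp _ _ ih₁ ih₂ => simp [BoundedFormula.mapTermRel, ih₁, ih₂]
  | all _ ih => simp [BoundedFormula.mapTermRel, ih]

theorem formula_relabel_eq_mapTermRel (g : α → β) (φ : L.Formula α) :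
    φ.relabel g =
      φ.mapTermRel (fun _ => Term.relabel (Sum.map g id)) (fun _ => id) fun _ => id :=
  (boundedFormula_relabel_inl_comp g φ).trans (BoundedFormula.castLE_rfl _ _)

theorem formula_relabel_id (φ : L.Formula α) : φ.relabel id = φ := by
  simp only [formula_relabel_eq_mapTermRel, Sum.map_id_id, Term.relabel_id_eq_id,
    BoundedFormula.mapTermRel_id_id_id]

theorem formula_relabel_relabel (f : α → β) (g : β → γ) (φ : L.Formula α) :
    (φ.relabel f).relabel g = φ.relabel (g ∘ f) := by
  simp only [formula_relabel_eq_mapTermRel, BoundedFormula.mapTermRel_mapTermRel,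
    Term.relabel_comp_relabel, Sum.map_comp_map, Function.comp_id]

end Relabel

variable {N : Type*} [arith.Structure N] {d : N}

theorem reduct_rfl {n : ℕ} (φ : CFormula N n) : reduct le_rfl φ = φ :=
  formula_relabel_id φ

theorem reduct_reduct {l m n : ℕ} (hlm : l ≤ m) (hmn : m ≤ n) (φ : CFormula N n) :
    reduct hlm (reduct hmn φ) = reduct (hlm.trans hmn) φ :=
  formula_relabel_relabel _ _ φ

theorem reduct_reductInf {m n : ℕ} (hmn : m ≤ n) (φ : CFormulaInf N) :
    reduct hmn (reductInf φ) = reductInf φ :=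
  formula_relabel_relabel _ _ φ

theorem realize_reductInf {n : ℕ} {φ : CFormulaInf N} {b : (Fin n → Bool) → N} :
    (reductInf φ).Realize b ↔ φ.Realize fun f => b fun i => f i :=
  Formula.realize_relabel

theorem CondLE.refl (p : Condition N d) : CondLE p p :=
  ⟨le_rfl, fun φ hφ => reduct_rfl φ ▸ hφ⟩

theorem CondLE.trans {p q r : Condition N d} (hrq : CondLE r q) (hqp : CondLE q p) :
    CondLE r p := by
  obtain ⟨hn_qr, hqr⟩ := hrq
  obtain ⟨hn_pq, hpq⟩ := hqp
  refine ⟨hn_pq.trans hn_qr, fun φ hφ => hqr φ (hpq _ ?_)⟩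
  rwa [reduct_reduct]

/-- The paper's order on `P`, in which stronger conditions lie below weaker ones. -/
instance Condition.instPreorder : Preorder (Condition N d) where
  le := CondLE
  le_refl := CondLE.refl
  le_trans _ _ _ := CondLE.trans

namespace Condition

/-- The formulas in the variables `(x_f : f ∈ 2^ω)` that ramify a formula of the condition `p`.
The paper's `G_{p⃗}` is the union of these sets over the members of the sequence `p⃗`. -/
def ramifications (p : Condition N d) : Set (CFormulaInf N) :=
  {φ | reductInf φ ∈ p.fmls}

theorem antitone_ramifications : Antitone (ramifications : Condition N d → Set (CFormulaInf N)) :=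
  fun q p ⟨hn, hqp⟩ φ hφ => hqp (reductInf φ) (by rwa [reduct_reductInf])

theorem exists_realize_ramifications (p : Condition N d) :
    ∃ b : (ℕ → Bool) → N, ∀ φ ∈ p.ramifications, φ.Realize b := by
  obtain ⟨b, hb⟩ := p.realizable
  exact ⟨fun f => b fun i => f i, fun φ hφ => realize_reductInf.mp (hb _ hφ)⟩

end Condition

end Arith

open Arith in
theorem statement_7_general {N : Type*} [arith.Structure N] {d : N} {ι : Type*} [Nonempty ι]
    {p : ι → Condition N d} (hp : Directed (· ≥ ·) p) {s : Set (CFormulaInf N)}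
    (hs : s ⊆ ⋃ i, (p i).ramifications) (hfin : s.Finite) :
    ∃ b : (ℕ → Bool) → N, ∀ φ ∈ s, φ.Realize b := by
  lift s to Finset (CFormulaInf N) using hfin
  have hdir : Directed (· ⊆ ·) fun i => (p i).ramifications :=
    hp.mono_comp (g := Condition.ramifications) _ fun _ _ hqp =>
      Condition.antitone_ramifications hqp
  obtain ⟨i, hi⟩ := hdir.exists_mem_subset_of_finset_subset_biUnion hs
  obtain ⟨b, hb⟩ := (p i).exists_realize_ramifications
  exact ⟨b, fun φ hφ => hb φ (hi hφ)⟩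

open Arith in
/-- If `(p_i : i ∈ ω)` is a descending sequence of conditions with `lim_i n_{p_i} = ∞`,
then the set `G` of formulas in the variables `(x_f : f ∈ 2^ω)` whose `n_{p_i}`-reduct
lies in `p_i` for some `i` is a type of `N`: every finite subset of `G` is realized
in `N`. -/
theorem statement_7 (N : Type*) [arith.Structure N] (hN : NonstandardModel N)
    (hNc : Countable N) (a d : N) (ha : ¬ IsStd a) (hd : IsPow2 a d)
    (p : ℕ → Condition N d)
    (hdesc : ∀ i : ℕ, CondLE (p (i + 1)) (p i))
    (hlim : Filter.Tendsto (fun i => (p i).n) Filter.atTop Filter.atTop)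
    (G : Set (CFormulaInf N))
    (hG : G = {φ | ∃ i : ℕ, reductInf (m := (p i).n) φ ∈ (p i).fmls}) :
    ∀ s : Set (CFormulaInf N), s ⊆ G → s.Finite →
      ∃ b : (ℕ → Bool) → N, ∀ φ ∈ s, φ.Realize b := by
  rw [Set.ofPred_exists] at hG
  exact fun s hs => statement_7_general (antitone_nat_of_succ_le hdesc).directed_ge (hG ▸ hs)
end
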